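/- arXiv:1904.01919 — 2 statements merged into one kernel-verified Lean document; each statement's English description precedes it below -/
import Mathlib

section
/- Let g be holomorphic on the unit disc D. Then: (i) the operator I_g maps the Besov space B^1 into the Bloch space 𝓑 if and only if g ∈ H^∞; (ii) the multiplication operator M_g maps B^1 into 𝓑 if and only if g ∈ H^∞. -/
open MeasureTheory Metric Complex Real Filter Set

noncomputable section

/-- `f` is holomorphic on the open unit disc. -/
def HolOn (f : ℂ → ℂ) : Prop := DifferentiableOn ℂ f (Metric.ball (0:ℂ) 1)

/-- The normalized Lebesgue area measure on `ℂ` (so the unit disc has total mass 1). -/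
def dA : Measure ℂ := (ENNReal.ofReal π)⁻¹ • volume

/-- Bounded holomorphic functions on the unit disc. -/
def Hinf : Set (ℂ → ℂ) :=
  {f | HolOn f ∧ ∃ C : ℝ, ∀ z ∈ Metric.ball (0:ℂ) 1, ‖f z‖ ≤ C}

/-- The Bloch space. -/
def Bloch : Set (ℂ → ℂ) :=
  {f | HolOn f ∧ ∃ C : ℝ, ∀ z ∈ Metric.ball (0:ℂ) 1,
      (1 - ‖z‖ ^ 2) * ‖deriv f z‖ ≤ C}

/-- The little Bloch space: `(1-|z|²)|f'(z)| → 0` as `|z| → 1⁻`. -/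
def littleBloch : Set (ℂ → ℂ) :=
  {f | HolOn f ∧ ∀ ε : ℝ, 0 < ε → ∃ r : ℝ, r < 1 ∧ ∀ z ∈ Metric.ball (0:ℂ) 1,
      r < ‖z‖ → (1 - ‖z‖ ^ 2) * ‖deriv f z‖ < ε}

/-- The `α`-logarithmic Bloch space. -/
def BlochLog (α : ℝ) : Set (ℂ → ℂ) :=
  {f | HolOn f ∧ ∃ C : ℝ, ∀ z ∈ Metric.ball (0:ℂ) 1,
      (1 - ‖z‖ ^ 2) * (Real.log (2 / (1 - ‖z‖ ^ 2))) ^ α *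
        ‖deriv f z‖ ≤ C}

/-- The Besov space `B¹`: holomorphic `f` with `∫_D |f''| dA < ∞`. -/
def Besov1 : Set (ℂ → ℂ) :=
  {f | HolOn f ∧ ∫⁻ z in Metric.ball (0:ℂ) 1,
      ENNReal.ofReal (‖deriv (deriv f) z‖) ∂dA < ⊤}

/-- The Besov space `Bᵖ` (`1 < p < ∞`): `∫_D (1-|z|)^(p-2) |f'(z)|^p dA(z) < ∞`. -/
def Besov (p : ℝ) : Set (ℂ → ℂ) :=
  {f | HolOn f ∧ ∫⁻ z in Metric.ball (0:ℂ) 1,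
      ENNReal.ofReal ((1 - ‖z‖) ^ (p - 2) * ‖deriv f z‖ ^ p) ∂dA < ⊤}

open scoped Classical in
/-- The Besov space `Bᵖ` for all `1 ≤ p < ∞` (with the special definition at `p = 1`). -/
def BesovFull (p : ℝ) : Set (ℂ → ℂ) := if p = 1 then Besov1 else Besov p

/-- The Möbius transformation `φ_a(z) = (a-z)/(1 - conj a · z)`. -/
def phi (a z : ℂ) : ℂ := (a - z) / (1 - (starRingEnd ℂ) a * z)

/-- The space `Q_s`. -/
def Qs (s : ℝ) : Set (ℂ → ℂ) :=
  {f | HolOn f ∧ ⨆ a ∈ Metric.ball (0:ℂ) 1, ∫⁻ z in Metric.ball (0:ℂ) 1,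
      ENNReal.ofReal (‖deriv f z‖ ^ 2 *
        (1 - ‖phi a z‖ ^ 2) ^ s) ∂dA < ⊤}

/-- The space `Q_{s,log,α}`. -/
def QsLog (s α : ℝ) : Set (ℂ → ℂ) :=
  {f | HolOn f ∧ ⨆ a ∈ Metric.ball (0:ℂ) 1,
      (ENNReal.ofReal ((Real.log (2 / (1 - ‖a‖))) ^ (2 * α)) *
        ∫⁻ z in Metric.ball (0:ℂ) 1,
          ENNReal.ofReal (‖deriv f z‖ ^ 2 *
            (1 - ‖phi a z‖ ^ 2) ^ s) ∂dA) < ⊤}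

/-- The Volterra operator `T_g(f)(z) = ∫_0^z g'(ξ) f(ξ) dξ` (along the segment from 0 to z). -/
def Tg (g f : ℂ → ℂ) : ℂ → ℂ :=
  fun z => z * ∫ t in (0:ℝ)..1, deriv g ((t : ℂ) * z) * f ((t : ℂ) * z)

/-- The companion operator `I_g(f)(z) = ∫_0^z g(ξ) f'(ξ) dξ` (along the segment from 0 to z). -/
def Ig (g f : ℂ → ℂ) : ℂ → ℂ :=
  fun z => z * ∫ t in (0:ℝ)..1, g ((t : ℂ) * z) * deriv f ((t : ℂ) * z)

/-- The multiplication operator `M_g(f) = g · f`. -/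
def Mg (g f : ℂ → ℂ) : ℂ → ℂ := fun z => g z * f z

/-- `T` maps `X` into `Y`. -/
def MapsInto (T : (ℂ → ℂ) → (ℂ → ℂ)) (X Y : Set (ℂ → ℂ)) : Prop :=
  ∀ f ∈ X, T f ∈ Y

/-- The Hardy space `H^q`. -/
def Hardy (q : ℝ) : Set (ℂ → ℂ) :=
  {f | HolOn f ∧ ∃ C : ℝ, ∀ r : ℝ, 0 < r → r < 1 →
      (1 / (2 * π)) * ∫ t in (0:ℝ)..(2 * π),
        ‖f ((r : ℂ) * Complex.exp ((t : ℂ) * Complex.I))‖ ^ q ≤ C}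

/-- An inner function: bounded holomorphic with radial boundary values of modulus 1 a.e. -/
def IsInner (g : ℂ → ℂ) : Prop :=
  g ∈ Hinf ∧ ∀ᵐ t : ℝ ∂(volume.restrict (Set.Ioc (0:ℝ) (2 * π))),
    Filter.Tendsto (fun r : ℝ => ‖g ((r : ℂ) * Complex.exp ((t : ℂ) * Complex.I))‖)
      (nhdsWithin 1 (Set.Iio 1)) (nhds 1)

/-- `X` has the f-property (division by inner functions). -/
def FProperty (X : Set (ℂ → ℂ)) : Prop :=
  ∀ h ∈ X, ∀ g : ℂ → ℂ, IsInner g →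
    (fun z => h z / g z) ∈ Hardy 1 → (fun z => h z / g z) ∈ X

/-- The space of multipliers `M(X,Y)`. -/
def Mult (X Y : Set (ℂ → ℂ)) : Set (ℂ → ℂ) :=
  {g | HolOn g ∧ ∀ f ∈ X, (fun z => g z * f z) ∈ Y}

end

lemma bdd_bloch {g : ℂ → ℂ} (hg : HolOn g) {C : ℝ}
    (hC : ∀ z ∈ Metric.ball (0:ℂ) 1, ‖g z‖ ≤ C) :
    ∀ z ∈ Metric.ball (0:ℂ) 1, (1 - ‖z‖ ^ 2) * ‖deriv g z‖ ≤ 4 * C := by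
  intro z hz
  have hC0 : 0 ≤ C := (norm_nonneg _).trans (hC z hz)
  have hz1 : ‖z‖ < 1 := by simpa using hz
  have hsub : Metric.closedBall z ((1 - ‖z‖) / 2) ⊆ Metric.ball (0:ℂ) 1 := by
    intro w hw
    rw [mem_closedBall, dist_eq_norm] at hw
    rw [mem_ball_zero_iff]
    have := norm_add_le (w - z) z
    rw [sub_add_cancel] at this
    linarith
  have hR : 0 < (1 - ‖z‖) / 2 := by linarith
  have h := Complex.norm_deriv_le_of_forall_mem_sphere_norm_le (f := g) (C := C) hR
    ((hg.mono hsub).diffContOnCl_ball subset_rfl) (fun w hw => hC w (hsub (sphere_subset_closedBall hw)))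
  rw [le_div_iff₀ hR] at h
  have h0 := norm_nonneg z
  have h1 := norm_nonneg (deriv g z)
  nlinarith [mul_nonneg h1 hR.le]

lemma Ig_deriv {g f : ℂ → ℂ} (hg : HolOn g) (hf : HolOn f) :
    HolOn (Ig g f) ∧ ∀ z ∈ Metric.ball (0:ℂ) 1, deriv (Ig g f) z = g z * deriv f z := by
  have hd : DifferentiableOn ℂ (fun z => g z * deriv f z) (Metric.ball (0:ℂ) 1) :=
    DifferentiableOn.mul hg (hf.deriv isOpen_ball)
  obtain ⟨G, hG⟩ := hd.isExactOn_ball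
  have key : ∀ z ∈ Metric.ball (0:ℂ) 1, Ig g f z = G z - G 0 := by
    intro z hz
    have hmem : ∀ t ∈ uIcc (0:ℝ) 1, (t:ℂ) * z ∈ Metric.ball (0:ℂ) 1 := by
      intro t ht
      rw [uIcc_of_le zero_le_one] at ht
      rw [mem_ball_zero_iff] at *
      rw [norm_mul, Complex.norm_real, Real.norm_of_nonneg ht.1]
      nlinarith [ht.2, norm_nonneg z]
    have hder : ∀ t ∈ uIcc (0:ℝ) 1, HasDerivAt (fun t : ℝ => G ((t:ℂ) * z))
        (g ((t:ℂ) * z) * deriv f ((t:ℂ) * z) * z) t := by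
      intro t ht
      have h1 := hG _ (hmem t ht)
      have h2 : HasDerivAt (fun s : ℂ => s * z) z (t:ℂ) := by
        simpa using (hasDerivAt_id (t:ℂ)).mul_const z
      exact (HasDerivAt.comp (t:ℂ) h1 h2).comp_ofReal
    have hcont : ContinuousOn (fun t : ℝ => g ((t:ℂ) * z) * deriv f ((t:ℂ) * z) * z) (uIcc (0:ℝ) 1) := by
      refine ContinuousOn.mul ?_ continuousOn_const
      exact hd.continuousOn.comp (f := fun t : ℝ => (t:ℂ) * z) (by fun_prop) hmem
    have := intervalIntegral.integral_eq_sub_of_hasDerivAt hder hcont.intervalIntegrable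
    rw [intervalIntegral.integral_mul_const] at this
    simp only [Ig]
    rw [mul_comm, this]; simp
  have hda : ∀ z ∈ Metric.ball (0:ℂ) 1, HasDerivAt (Ig g f) (g z * deriv f z) z := by
    intro z hz
    refine ((hG z hz).sub_const (G 0)).congr_of_eventuallyEq ?_
    filter_upwards [isOpen_ball.mem_nhds hz] with w hw using key w hw
  exact ⟨fun z hz => (hda z hz).differentiableAt.differentiableWithinAt, fun z hz => (hda z hz).deriv⟩

lemma circle_mean {h : ℂ → ℂ} {c : ℂ} {r ρ : ℝ}
    (hd : DifferentiableOn ℂ h (Metric.ball c r)) (h0 : 0 < ρ) (hr : ρ < r) :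
    ENNReal.ofReal (2 * π) * ‖h c‖ₑ ≤ ∫⁻ θ in Ioo (-π) π, ‖h (circleMap c ρ θ)‖ₑ := by
  have h1 : Real.circleAverage h c ρ = h c := by
    apply DiffContOnCl.circleAverage
    rw [abs_of_pos h0]
    exact (hd.mono (closedBall_subset_ball hr)).diffContOnCl_ball subset_rfl
  have hper : Function.Periodic (fun θ => h (circleMap c ρ θ)) (2 * π) := by
    intro θ; simp only; rw [periodic_circleMap c ρ θ]
  have h2 := hper.intervalIntegral_add_eq 0 (-π)
  rw [zero_add, show -π + 2 * π = π by ring] at h2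
  rw [Real.circleAverage_def, h2, intervalIntegral.integral_of_le (by linarith [pi_pos])] at h1
  have h3 : ENNReal.ofReal (2 * π) * ‖h c‖ₑ = ‖(2 * π) • h c‖ₑ := by
    rw [enorm_smul, Real.enorm_eq_ofReal (by positivity)]
  rw [h3, ← h1, smul_smul, mul_inv_cancel₀ (by positivity), one_smul]
  refine (enorm_integral_le_lintegral_enorm _).trans ?_
  rw [restrict_Ioo_eq_restrict_Ioc]

lemma area_mean {h : ℂ → ℂ} (hm : Measurable h) {c : ℂ} {r : ℝ} (hr : 0 < r)
    (hd : DifferentiableOn ℂ h (Metric.ball c r)) :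
    ENNReal.ofReal (π * r ^ 2 / 2) * ‖h c‖ₑ ≤ ∫⁻ w in Metric.ball c r, ‖h w‖ₑ := by
  rw [← lintegral_indicator measurableSet_ball, ← lintegral_add_left_eq_self _ c,
    ← Complex.lintegral_comp_polarCoord_symm]
  have hF : Measurable (fun p : ℝ × ℝ => ENNReal.ofReal p.1 * ‖h (circleMap c p.1 p.2)‖ₑ) := by
    have : Measurable (fun p : ℝ × ℝ => circleMap c p.1 p.2) := by
      unfold circleMap; fun_prop
    have := hm.comp this
    fun_prop
  calc ENNReal.ofReal (π * r ^ 2 / 2) * ‖h c‖ₑ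
      = ∫⁻ ρ in Ioo (r/2) r, ENNReal.ofReal (r/2) * (ENNReal.ofReal (2 * π) * ‖h c‖ₑ) := by
        rw [setLIntegral_const, Real.volume_Ioo, ← mul_assoc, mul_right_comm,
          ← ENNReal.ofReal_mul (by positivity), ← ENNReal.ofReal_mul (by positivity)]
        congr 2; ring
    _ ≤ ∫⁻ ρ in Ioo (r/2) r, ∫⁻ θ in Ioo (-π) π,
          ENNReal.ofReal ρ * ‖h (circleMap c ρ θ)‖ₑ := by
        refine setLIntegral_mono' measurableSet_Ioo fun ρ hρ => ?_
        rw [lintegral_const_mul' _ _ ENNReal.ofReal_ne_top]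
        exact mul_le_mul' (ENNReal.ofReal_le_ofReal hρ.1.le)
          (circle_mean hd (by linarith [hρ.1]) hρ.2)
    _ = ∫⁻ p in Ioo (r/2) r ×ˢ Ioo (-π) π,
          ENNReal.ofReal p.1 * ‖h (circleMap c p.1 p.2)‖ₑ := by
        rw [Measure.volume_eq_prod, setLIntegral_prod _ hF.aemeasurable]
    _ ≤ ∫⁻ p in Ioo (r/2) r ×ˢ Ioo (-π) π, ENNReal.ofReal p.1 •
          (Metric.ball c r).indicator (fun w => ‖h w‖ₑ) (c + Complex.polarCoord.symm p) := by
        refine setLIntegral_mono' (measurableSet_Ioo.prod measurableSet_Ioo) fun p hp => ?_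
        have hp1 : 0 < p.1 := by linarith [hp.1.1]
        have e : c + Complex.polarCoord.symm p = circleMap c p.1 p.2 := by
          rw [Complex.polarCoord_symm_apply, circleMap, Complex.exp_mul_I]
          push_cast; ring
        rw [e, indicator_of_mem, smul_eq_mul]
        rw [mem_ball, dist_eq_norm, circleMap_sub_center, norm_circleMap_zero, abs_of_pos hp1]
        exact hp.1.2
    _ ≤ _ := by
        refine lintegral_mono_set ?_
        rintro p ⟨h1, h2⟩
        exact ⟨by simpa using lt_trans (by linarith) h1.1, h2⟩

lemma kernel_bound {z w : ℂ} (hz : ‖z‖ < 1) (hz' : 3 / 4 ≤ ‖z‖) :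
    ∫⁻ t in Ioo (0:ℝ) 1, ENNReal.ofReal (4 / (1 - t)) *
      {p : ℝ × ℂ | dist p.2 ((p.1:ℂ) * z) < (1 - p.1) / 2}.indicator 1 (t, w) ≤ ENNReal.ofReal 24 := by
  set δ := dist w z with hδ
  calc _ ≤ ∫⁻ t in Ioo (0:ℝ) 1, (Icc (1 - 4 * δ) 1).indicator
          (fun _ => ENNReal.ofReal (6 / δ)) t := by
        refine setLIntegral_mono' measurableSet_Ioo fun t ht => ?_
        by_cases hm : dist w ((t:ℂ) * z) < (1 - t) / 2
        · have h1t : 0 < 1 - t := by linarith [ht.2]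
          have e : dist ((t:ℂ) * z) z = (1 - t) * ‖z‖ := by
            rw [dist_comm, dist_eq_norm, show z - (t:ℂ) * z = ((1 - t : ℝ) : ℂ) * z by push_cast; ring,
              norm_mul, Complex.norm_real, Real.norm_of_nonneg h1t.le]
          have h1 : δ ≤ 3 / 2 * (1 - t) := by
            have := dist_triangle w ((t:ℂ) * z) z
            rw [e] at this
            nlinarith
          have h2 : (1 - t) / 4 ≤ δ := by
            have := dist_triangle_left ((t:ℂ) * z) z w
            rw [e] at this
            nlinarith
          have hδ0 : 0 < δ := by linarith
          rw [indicator_of_mem (show (t, w) ∈ {p : ℝ × ℂ | dist p.2 ((p.1:ℂ) * z) < (1 - p.1) / 2} from hm),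
            indicator_of_mem (show t ∈ Icc (1 - 4 * δ) 1 from ⟨by linarith, ht.2.le⟩)]
          simp only [Pi.one_apply, mul_one]
          apply ENNReal.ofReal_le_ofReal
          rw [div_le_div_iff₀ h1t hδ0]
          linarith
        · rw [indicator_of_notMem (show (t, w) ∉ {p : ℝ × ℂ | dist p.2 ((p.1:ℂ) * z) < (1 - p.1) / 2} from hm)]
          simp
    _ ≤ ∫⁻ t, (Icc (1 - 4 * δ) 1).indicator (fun _ => ENNReal.ofReal (6 / δ)) t :=
        setLIntegral_le_lintegral _ _
    _ ≤ ENNReal.ofReal 24 := by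
        rw [lintegral_indicator measurableSet_Icc, setLIntegral_const, Real.volume_Icc,
          ← ENNReal.ofReal_mul (by positivity)]
        apply ENNReal.ofReal_le_ofReal
        by_cases h0 : δ = 0
        · simp [h0]
        · rw [show 6 / δ * (1 - (1 - 4 * δ)) = 24 by field_simp; ring]

lemma radial_bound {h : ℂ → ℂ} (hm : Measurable h)
    (hd : DifferentiableOn ℂ h (Metric.ball 0 1)) {z : ℂ} (hz : ‖z‖ < 1) (hz' : 3 / 4 ≤ ‖z‖) :
    ∫⁻ t in Ioo (0:ℝ) 1, ENNReal.ofReal (1 - t) * ‖h ((t:ℂ) * z)‖ₑ ≤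
      ENNReal.ofReal 24 * ∫⁻ w in Metric.ball (0:ℂ) 1, ‖h w‖ₑ := by
  set S := {p : ℝ × ℂ | dist p.2 ((p.1:ℂ) * z) < (1 - p.1) / 2} with hS
  have hSm : MeasurableSet S := by
    apply IsOpen.measurableSet
    exact isOpen_lt (by fun_prop) (by fun_prop)
  have hmeas : Measurable (fun p : ℝ × ℂ =>
      ENNReal.ofReal (4 / (1 - p.1)) * S.indicator 1 p * ‖h p.2‖ₑ) := by
    have : Measurable (S.indicator (1 : ℝ × ℂ → ENNReal)) := measurable_one.indicator hSm
    have : Measurable (fun p : ℝ × ℂ => h p.2) := hm.comp measurable_snd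
    fun_prop
  calc _ ≤ ∫⁻ t in Ioo (0:ℝ) 1, ∫⁻ w in Metric.ball (0:ℂ) 1,
            ENNReal.ofReal (4 / (1 - t)) * S.indicator 1 (t, w) * ‖h w‖ₑ := by
        refine setLIntegral_mono' measurableSet_Ioo fun t ht => ?_
        have h1t : 0 < 1 - t := by linarith [ht.2]
        have hsub : Metric.ball ((t:ℂ) * z) ((1 - t) / 2) ⊆ Metric.ball 0 1 := by
          intro w hw
          rw [mem_ball, dist_eq_norm] at hw
          rw [mem_ball_zero_iff]
          have := norm_add_le (w - t * z) (t * z)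
          rw [sub_add_cancel, norm_mul, Complex.norm_real, Real.norm_of_nonneg ht.1.le] at this
          nlinarith [ht.1]
        have key := area_mean hm (half_pos h1t) (hd.mono hsub)
        calc ENNReal.ofReal (1 - t) * ‖h ((t:ℂ) * z)‖ₑ
            ≤ ENNReal.ofReal (4 / (1 - t)) * (ENNReal.ofReal (π * ((1 - t) / 2) ^ 2 / 2) * ‖h (t * z)‖ₑ) := by
              rw [← mul_assoc, ← ENNReal.ofReal_mul (by positivity)]
              refine mul_le_mul' (ENNReal.ofReal_le_ofReal ?_) le_rfl
              rw [show 4 / (1 - t) * (π * ((1 - t) / 2) ^ 2 / 2) = (1 - t) * (π / 2) by field_simp; ring]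
              nlinarith [Real.pi_gt_three]
          _ ≤ ENNReal.ofReal (4 / (1 - t)) * ∫⁻ w in Metric.ball ((t:ℂ) * z) ((1 - t) / 2), ‖h w‖ₑ := by
              gcongr
          _ = ENNReal.ofReal (4 / (1 - t)) * ∫⁻ w in Metric.ball (0:ℂ) 1, S.indicator 1 (t, w) * ‖h w‖ₑ := by
              congr 1
              rw [← lintegral_indicator measurableSet_ball, ← lintegral_indicator measurableSet_ball]
              congr 1
              ext w
              by_cases hw : w ∈ Metric.ball ((t:ℂ) * z) ((1 - t) / 2)
              · rw [indicator_of_mem hw, indicator_of_mem (hsub hw),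
                  indicator_of_mem (show (t, w) ∈ S from hw)]
                simp
              · rw [indicator_of_notMem hw]
                by_cases hw' : w ∈ Metric.ball (0:ℂ) 1
                · rw [indicator_of_mem hw', indicator_of_notMem (show (t, w) ∉ S from hw)]
                  simp
                · rw [indicator_of_notMem hw']
          _ = _ := by
              rw [← lintegral_const_mul' _ _ ENNReal.ofReal_ne_top]
              simp only [mul_assoc]
    _ = ∫⁻ w in Metric.ball (0:ℂ) 1, ∫⁻ t in Ioo (0:ℝ) 1,
            ENNReal.ofReal (4 / (1 - t)) * S.indicator 1 (t, w) * ‖h w‖ₑ :=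
        lintegral_lintegral_swap hmeas.aemeasurable
    _ ≤ ∫⁻ w in Metric.ball (0:ℂ) 1, ENNReal.ofReal 24 * ‖h w‖ₑ := by
        refine lintegral_mono fun w => ?_
        simp only
        rw [lintegral_mul_const' _ _ enorm_ne_top]
        gcongr
        exact kernel_bound hz hz'
    _ = _ := lintegral_const_mul' _ _ ENNReal.ofReal_ne_top

lemma besov_lintegral {f : ℂ → ℂ} (hf : f ∈ Besov1) :
    ∫⁻ w in Metric.ball (0:ℂ) 1, ‖deriv (deriv f) w‖ₑ < ⊤ := by
  have h := hf.2
  simp only [dA, Measure.restrict_smul, lintegral_smul_measure, ofReal_norm, smul_eq_mul] at h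
  by_contra hc
  rw [not_lt, top_le_iff] at hc
  rw [hc, ENNReal.mul_top (by simp)] at h
  exact lt_irrefl _ h

lemma besov_bdd {f : ℂ → ℂ} (hf : f ∈ Besov1) :
    ∃ C : ℝ, ∀ z ∈ Metric.ball (0:ℂ) 1, ‖f z‖ ≤ C := by
  have hfd : DifferentiableOn ℂ f (Metric.ball (0:ℂ) 1) := hf.1
  have hfd1 := hfd.deriv isOpen_ball
  have hfd2 := hfd1.deriv isOpen_ball
  have hlt := besov_lintegral hf
  set M := (ENNReal.ofReal 24 * ∫⁻ w in Metric.ball (0:ℂ) 1, ‖deriv (deriv f) w‖ₑ) with hM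
  have hMt : M ≠ ⊤ := ENNReal.mul_ne_top ENNReal.ofReal_ne_top hlt.ne
  obtain ⟨C0, hC0⟩ := (isCompact_closedBall (0:ℂ) (3/4)).exists_bound_of_continuousOn
    (hfd.continuousOn.mono (closedBall_subset_ball (by norm_num)))
  refine ⟨max C0 (M.toReal + ‖f 0‖ + ‖deriv f 0‖), fun z hz => ?_⟩
  have hz1 : ‖z‖ < 1 := by simpa using hz
  rcases le_or_gt ‖z‖ (3/4) with hz' | hz'
  · exact (hC0 z (by simpa using hz')).trans (le_max_left _ _)
  refine le_trans ?_ (le_max_right _ _)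
  have hmem : ∀ t ∈ uIcc (0:ℝ) 1, (t:ℂ) * z ∈ Metric.ball (0:ℂ) 1 := by
    intro t ht
    rw [uIcc_of_le zero_le_one] at ht
    rw [mem_ball_zero_iff, norm_mul, Complex.norm_real, Real.norm_of_nonneg ht.1]
    nlinarith [ht.2, norm_nonneg z]
  have hder : ∀ t ∈ uIcc (0:ℝ) 1, HasDerivAt
      (fun t : ℝ => f ((t:ℂ) * z) + (1 - (t:ℂ)) * z * deriv f ((t:ℂ) * z))
      ((1 - (t:ℂ)) * z ^ 2 * deriv (deriv f) ((t:ℂ) * z)) t := by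
    intro t ht
    have hn := isOpen_ball.mem_nhds (hmem t ht)
    have h1 := (hfd.differentiableAt hn).hasDerivAt
    have h1' := (hfd1.differentiableAt hn).hasDerivAt
    have h2 : HasDerivAt (fun s : ℂ => s * z) z (t:ℂ) := by
      simpa using (hasDerivAt_id (t:ℂ)).mul_const z
    have h3 : HasDerivAt (fun s : ℂ => (1 - s) * z) (-1 * z) (t:ℂ) :=
      ((hasDerivAt_id (t:ℂ)).const_sub 1).mul_const z
    have h4 := (HasDerivAt.comp (t:ℂ) h1 h2).add (h3.mul (HasDerivAt.comp (t:ℂ) h1' h2))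
    have h5 := h4.comp_ofReal
    refine h5.congr_deriv ?_
    simp only [Function.comp]
    ring
  have hcont : ContinuousOn (fun t : ℝ => (1 - (t:ℂ)) * z ^ 2 * deriv (deriv f) ((t:ℂ) * z)) (uIcc (0:ℝ) 1) := by
    refine ContinuousOn.mul (by fun_prop) ?_
    exact hfd2.continuousOn.comp (f := fun t : ℝ => (t:ℂ) * z) (by fun_prop) hmem
  have hint := intervalIntegral.integral_eq_sub_of_hasDerivAt hder hcont.intervalIntegrable
  have hle : ‖∫ t in (0:ℝ)..1, (1 - (t:ℂ)) * z ^ 2 * deriv (deriv f) ((t:ℂ) * z)‖ₑ ≤ M := by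
    rw [intervalIntegral.integral_of_le zero_le_one]
    refine (enorm_integral_le_lintegral_enorm _).trans ?_
    rw [← restrict_Ioo_eq_restrict_Ioc]
    refine le_trans ?_ (radial_bound (measurable_deriv _) hfd2 hz1 hz'.le)
    refine setLIntegral_mono' measurableSet_Ioo fun t ht => ?_
    rw [enorm_mul]
    gcongr
    rw [← ofReal_norm]
    apply ENNReal.ofReal_le_ofReal
    rw [norm_mul, norm_pow, show (1 - (t:ℂ)) = ((1 - t : ℝ) : ℂ) by push_cast; ring,
      Complex.norm_real, Real.norm_of_nonneg (by linarith [ht.2])]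
    have : ‖z‖ ^ 2 ≤ 1 := pow_le_one₀ (norm_nonneg _) hz1.le
    nlinarith [ht.2]
  have hle' := ENNReal.toReal_mono hMt hle
  rw [toReal_enorm, hint] at hle'
  simp only [Complex.ofReal_one, one_mul, sub_self, zero_mul, add_zero, Complex.ofReal_zero, sub_zero] at hle'
  have e : f z = (f z - (f 0 + z * deriv f 0)) + f 0 + z * deriv f 0 := by ring
  have h6 : ‖z * deriv f 0‖ ≤ ‖deriv f 0‖ := by
    rw [norm_mul]; nlinarith [norm_nonneg (deriv f 0)]
  rw [e]
  refine (norm_add₃_le).trans ?_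
  linarith

lemma one_sub_ne {a z : ℂ} (ha : ‖a‖ < 1) (hz : ‖z‖ < 1) :
    1 - ‖z‖ ≤ ‖1 - (starRingEnd ℂ) a * z‖ := by
  have h := norm_sub_norm_le (1:ℂ) ((starRingEnd ℂ) a * z)
  rw [norm_one, norm_mul, RCLike.norm_conj] at h
  nlinarith [norm_nonneg z]

lemma one_sub_ne0 {a z : ℂ} (ha : ‖a‖ < 1) (hz : ‖z‖ < 1) :
    1 - (starRingEnd ℂ) a * z ≠ 0 := by
  rw [← norm_pos_iff]
  linarith [one_sub_ne ha hz]

lemma phi_mem {a z : ℂ} (ha : ‖a‖ < 1) (hz : ‖z‖ < 1) : ‖phi a z‖ < 1 := by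
  have h0 := norm_pos_iff.2 (one_sub_ne0 ha hz)
  rw [phi, norm_div, div_lt_one h0]
  have e : ‖1 - (starRingEnd ℂ) a * z‖ ^ 2 - ‖a - z‖ ^ 2 = (1 - ‖a‖ ^ 2) * (1 - ‖z‖ ^ 2) := by
    simp only [← Complex.normSq_eq_norm_sq, Complex.normSq_apply]
    simp
    ring
  have h1 : 0 < 1 - ‖a‖ ^ 2 := by nlinarith [norm_nonneg a]
  have h2 : 0 < 1 - ‖z‖ ^ 2 := by nlinarith [norm_nonneg z]
  refine lt_of_pow_lt_pow_left₀ 2 h0.le ?_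
  nlinarith [mul_pos h1 h2]

lemma conj_mul_self' (a : ℂ) : (starRingEnd ℂ) a * a = ((‖a‖ ^ 2 : ℝ) : ℂ) := by
  rw [Complex.conj_mul']; push_cast; rfl

lemma phi_inj {a : ℂ} (ha : ‖a‖ < 1) : InjOn (phi a) (Metric.ball (0:ℂ) 1) := by
  intro z hz w hw h
  rw [mem_ball_zero_iff] at hz hw
  unfold phi at h
  rw [div_eq_div_iff (one_sub_ne0 ha hz) (one_sub_ne0 ha hw)] at h
  have h2 : (1 - (starRingEnd ℂ) a * a) * (w - z) = 0 := by linear_combination h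
  rcases mul_eq_zero.1 h2 with h3 | h3
  · exact absurd h3 (one_sub_ne0 ha ha)
  · exact (sub_eq_zero.1 h3).symm

lemma phi_deriv {a z : ℂ} (ha : ‖a‖ < 1) (hz : ‖z‖ < 1) :
    HasDerivAt (phi a) (-((1 - ‖a‖ ^ 2 : ℝ) : ℂ) / (1 - (starRingEnd ℂ) a * z) ^ 2) z := by
  have h1 : HasDerivAt (fun z : ℂ => a - z) (-1) z := (hasDerivAt_id z).const_sub a
  have h2 : HasDerivAt (fun z : ℂ => 1 - (starRingEnd ℂ) a * z) (-((starRingEnd ℂ) a * 1)) z :=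
    ((hasDerivAt_id z).const_mul _).const_sub 1
  refine (h1.div h2 (one_sub_ne0 ha hz)).congr_deriv ?_
  congr 1
  push_cast
  have := conj_mul_self' a
  push_cast at this
  linear_combination this

/-- test functions -/
noncomputable def tF (a z : ℂ) : ℂ := ((1 - ‖a‖ ^ 2 : ℝ) : ℂ) ^ 2 * ((1 - (starRingEnd ℂ) a * z) ^ 2)⁻¹
noncomputable def tF1 (a z : ℂ) : ℂ :=
  ((1 - ‖a‖ ^ 2 : ℝ) : ℂ) ^ 2 * (2 * (starRingEnd ℂ) a) * ((1 - (starRingEnd ℂ) a * z) ^ 3)⁻¹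
noncomputable def tF2 (a z : ℂ) : ℂ :=
  ((1 - ‖a‖ ^ 2 : ℝ) : ℂ) ^ 2 * (6 * (starRingEnd ℂ) a ^ 2) * ((1 - (starRingEnd ℂ) a * z) ^ 4)⁻¹

lemma tF_deriv {a z : ℂ} (ha : ‖a‖ < 1) (hz : ‖z‖ < 1) : HasDerivAt (tF a) (tF1 a z) z := by
  have h2 : HasDerivAt (fun z : ℂ => 1 - (starRingEnd ℂ) a * z) (-((starRingEnd ℂ) a * 1)) z :=
    ((hasDerivAt_id z).const_mul _).const_sub 1
  have h0 := one_sub_ne0 ha hz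
  refine (((h2.pow 2).inv (pow_ne_zero 2 h0)).const_mul (((1 - ‖a‖ ^ 2 : ℝ) : ℂ) ^ 2)).congr_deriv ?_
  simp only [Pi.pow_apply, tF1]
  field_simp
  norm_num
  ring

lemma tF1_deriv {a z : ℂ} (ha : ‖a‖ < 1) (hz : ‖z‖ < 1) : HasDerivAt (tF1 a) (tF2 a z) z := by
  have h2 : HasDerivAt (fun z : ℂ => 1 - (starRingEnd ℂ) a * z) (-((starRingEnd ℂ) a * 1)) z :=
    ((hasDerivAt_id z).const_mul _).const_sub 1
  have h0 := one_sub_ne0 ha hz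
  refine (((h2.pow 3).inv (pow_ne_zero 3 h0)).const_mul
    (((1 - ‖a‖ ^ 2 : ℝ) : ℂ) ^ 2 * (2 * (starRingEnd ℂ) a))).congr_deriv ?_
  simp only [Pi.pow_apply, tF2]
  field_simp
  norm_num
  ring

lemma s_bd {a : ℂ} (ha : ‖a‖ < 1) : ‖((1 - ‖a‖ ^ 2 : ℝ) : ℂ) ^ 2‖ ≤ 1 := by
  rw [norm_pow, Complex.norm_real]
  apply pow_le_one₀ (norm_nonneg _)
  rw [Real.norm_eq_abs, abs_le]
  constructor <;> nlinarith [norm_nonneg a]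

lemma tF_bd {a z : ℂ} (ha : ‖a‖ < 1) (hz : ‖z‖ < 1) : ‖tF a z‖ ≤ ((1 - ‖z‖) ^ 2)⁻¹ := by
  have h1 : 0 < 1 - ‖z‖ := by linarith
  rw [tF, norm_mul, norm_inv, norm_pow (1 - _)]
  calc _ ≤ 1 * ((1 - ‖z‖) ^ 2)⁻¹ := by
        gcongr
        · exact s_bd ha
        · exact one_sub_ne ha hz
    _ = _ := one_mul _

lemma tF1_bd {a z : ℂ} (ha : ‖a‖ < 1) (hz : ‖z‖ < 1) : ‖tF1 a z‖ ≤ 2 * ((1 - ‖z‖) ^ 3)⁻¹ := by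
  have h1 : 0 < 1 - ‖z‖ := by linarith
  rw [tF1, norm_mul, norm_inv, norm_pow (1 - _)]
  gcongr
  · rw [norm_mul, norm_mul, RCLike.norm_conj]
    have := s_bd ha
    simp only [Complex.norm_ofNat]
    nlinarith [norm_nonneg a, norm_nonneg (((1 - ‖a‖ ^ 2 : ℝ) : ℂ) ^ 2)]
  · exact one_sub_ne ha hz

lemma tF2_int {a : ℂ} (ha : ‖a‖ < 1) :
    ∫⁻ z in Metric.ball (0:ℂ) 1, ‖tF2 a z‖ₑ ≤ 6 * volume (Metric.ball (0:ℂ) 1) := by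
  have key := lintegral_abs_det_fderiv_eq_addHaar_image volume (measurableSet_ball (x := (0:ℂ)) (ε := 1))
    (fun x hx => ((phi_deriv ha (mem_ball_zero_iff.1 hx)).hasFDerivAt.restrictScalars ℝ).hasFDerivWithinAt)
    (phi_inj ha)
  have himg : Set.image (phi a) (Metric.ball (0:ℂ) 1) ⊆ Metric.ball (0:ℂ) 1 := by
    rintro _ ⟨z, hz, rfl⟩
    rw [mem_ball_zero_iff] at *
    exact phi_mem ha hz
  have hdet : ∀ c : ℂ, ((ContinuousLinearMap.toSpanSingleton ℂ c).restrictScalars ℝ).det = ‖c‖ ^ 2 := by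
    intro c
    have h1 : ((ContinuousLinearMap.toSpanSingleton ℂ c).restrictScalars ℝ).det
      = LinearMap.det (((ContinuousLinearMap.toSpanSingleton ℂ c : ℂ →L[ℂ] ℂ) : ℂ →ₗ[ℂ] ℂ).restrictScalars ℝ) := rfl
    rw [h1, LinearMap.det_restrictScalars, Algebra.norm_complex_eq]
    rw [← Complex.normSq_eq_norm_sq]
    simp
  calc _ ≤ ∫⁻ z in Metric.ball (0:ℂ) 1, 6 * ENNReal.ofReal |((ContinuousLinearMap.toSpanSingleton ℂ
            (-((1 - ‖a‖ ^ 2 : ℝ) : ℂ) / (1 - (starRingEnd ℂ) a * z) ^ 2)).restrictScalars ℝ).det| := by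
        refine setLIntegral_mono' measurableSet_ball fun z hz => ?_
        rw [hdet, ← ofReal_norm, show (6 : ENNReal) = ENNReal.ofReal 6 by simp,
          ← ENNReal.ofReal_mul (by norm_num)]
        apply ENNReal.ofReal_le_ofReal
        rw [abs_of_nonneg (by positivity), tF2]
        simp only [norm_mul, norm_div, norm_pow, norm_inv, norm_neg, RCLike.norm_conj, Complex.norm_ofNat]
        rw [div_pow, ← pow_mul, div_eq_mul_inv]
        have : ‖a‖ ^ 2 ≤ 1 := pow_le_one₀ (norm_nonneg _) ha.le
        have h3 : 0 ≤ ‖((1 - ‖a‖ ^ 2 : ℝ) : ℂ)‖ ^ 2 * (‖1 - (starRingEnd ℂ) a * z‖ ^ (2*2))⁻¹ := by positivity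
        norm_num at h3 ⊢
        nlinarith
    _ = 6 * volume (Set.image (phi a) (Metric.ball (0:ℂ) 1)) := by
        rw [lintegral_const_mul' _ _ (by simp)]
        exact congrArg _ key
    _ ≤ _ := by gcongr

lemma series_deriv {G : ℕ → ℂ → ℂ} (hG : ∀ k, DifferentiableOn ℂ (G k) (Metric.ball (0:ℂ) 1))
    (hB : ∀ r : ℝ, r < 1 → ∃ B : ℝ, ∀ k, ∀ z ∈ Metric.ball (0:ℂ) r, ‖G k z‖ ≤ B)
    {c : ℕ → ℂ} (hc : Summable fun k => ‖c k‖) {z : ℂ} (hz : ‖z‖ < 1) :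
    DifferentiableAt ℂ (fun w => ∑' k, c k * G k w) z ∧
      deriv (fun w => ∑' k, c k * G k w) z = ∑' k, c k * deriv (G k) z := by
  obtain ⟨r, hzr, hr⟩ := exists_between hz
  obtain ⟨B, hB⟩ := hB r hr
  have hsub : Metric.ball (0:ℂ) r ⊆ Metric.ball 0 1 := ball_subset_ball hr.le
  have hd : ∀ k, DifferentiableOn ℂ (fun w => c k * G k w) (Metric.ball (0:ℂ) r) :=
    fun k => ((hG k).mono hsub).const_mul (c k)
  have hb : ∀ k, ∀ w ∈ Metric.ball (0:ℂ) r, ‖c k * G k w‖ ≤ ‖c k‖ * B := by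
    intro k w hw
    rw [norm_mul]
    exact mul_le_mul_of_nonneg_left (hB k w hw) (norm_nonneg _)
  have hzm : z ∈ Metric.ball (0:ℂ) r := by simpa using hzr
  refine ⟨(Complex.differentiableOn_tsum_of_summable_norm (hc.mul_right B) hd isOpen_ball hb).differentiableAt
    (isOpen_ball.mem_nhds hzm), ?_⟩
  rw [← (Complex.hasSum_deriv_of_summable_norm (hc.mul_right B) hd isOpen_ball hb hzm).tsum_eq]
  congr 1
  ext k
  rw [deriv_const_mul _ ((hG k).differentiableAt (isOpen_ball.mem_nhds (hsub hzm)))]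

lemma series_besov {a : ℕ → ℂ} (ha : ∀ k, ‖a k‖ < 1) {c : ℕ → ℂ} (hc : Summable fun k => ‖c k‖) :
    (fun w => ∑' k, c k * tF (a k) w) ∈ Besov1 ∧ ∀ z ∈ Metric.ball (0:ℂ) 1,
      deriv (fun w => ∑' k, c k * tF (a k) w) z = ∑' k, c k * tF1 (a k) z := by
  have hnb : ∀ r : ℝ, ∀ z ∈ Metric.ball (0:ℂ) r, ‖z‖ < r := fun r z hz => by simpa using hz
  have A := fun z hz => series_deriv (G := fun k => tF (a k)) (c := c)
    (fun k z hz => (tF_deriv (ha k) (hnb 1 z hz)).differentiableAt.differentiableWithinAt)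
    (fun r hr => ⟨((1 - r) ^ 2)⁻¹, fun k z hz => (tF_bd (ha k) ((hnb r z hz).trans hr)).trans (by
      have := hnb r z hz
      have : 0 < 1 - r := by linarith
      gcongr)⟩) hc (z := z) hz
  have B := fun z hz => series_deriv (G := fun k => tF1 (a k)) (c := c)
    (fun k z hz => (tF1_deriv (ha k) (hnb 1 z hz)).differentiableAt.differentiableWithinAt)
    (fun r hr => ⟨2 * ((1 - r) ^ 3)⁻¹, fun k z hz => (tF1_bd (ha k) ((hnb r z hz).trans hr)).trans (by
      have := hnb r z hz
      have : 0 < 1 - r := by linarith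
      gcongr)⟩) hc (z := z) hz
  have D1 : ∀ z ∈ Metric.ball (0:ℂ) 1,
      deriv (fun w => ∑' k, c k * tF (a k) w) z = ∑' k, c k * tF1 (a k) z := by
    intro z hz
    rw [(A z (hnb 1 z hz)).2]
    congr 1; ext k
    rw [(tF_deriv (ha k) (hnb 1 z hz)).deriv]
  have D2 : ∀ z ∈ Metric.ball (0:ℂ) 1,
      deriv (deriv (fun w => ∑' k, c k * tF (a k) w)) z = ∑' k, c k * tF2 (a k) z := by
    intro z hz
    have : deriv (fun w => ∑' k, c k * tF (a k) w) =ᶠ[nhds z] fun w => ∑' k, c k * tF1 (a k) w := by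
      filter_upwards [isOpen_ball.mem_nhds hz] with w hw using D1 w hw
    rw [this.deriv_eq, (B z (hnb 1 z hz)).2]
    congr 1; ext k
    rw [(tF1_deriv (ha k) (hnb 1 z hz)).deriv]
  refine ⟨⟨fun z hz => (A z (hnb 1 z hz)).1.differentiableWithinAt, ?_⟩, D1⟩
  simp only [dA, Measure.restrict_smul, lintegral_smul_measure, ofReal_norm, smul_eq_mul]
  refine ENNReal.mul_lt_top (by simp [pi_pos]) ?_
  have hm : ∀ k, Measurable (fun z => ‖c k‖ₑ * ‖tF2 (a k) z‖ₑ) := by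
    intro k
    unfold tF2
    fun_prop
  calc _ ≤ ∫⁻ z in Metric.ball (0:ℂ) 1, ∑' k, ‖c k‖ₑ * ‖tF2 (a k) z‖ₑ := by
        refine setLIntegral_mono' measurableSet_ball fun z hz => ?_
        rw [D2 z hz]
        simp only [← enorm_mul]
        exact enorm_tsum_le_tsum_enorm
    _ = ∑' k, ∫⁻ z in Metric.ball (0:ℂ) 1, ‖c k‖ₑ * ‖tF2 (a k) z‖ₑ :=
        lintegral_tsum fun k => (hm k).aemeasurable
    _ ≤ ∑' k, ‖c k‖ₑ * (6 * volume (Metric.ball (0:ℂ) 1)) := by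
        refine ENNReal.tsum_le_tsum fun k => ?_
        rw [lintegral_const_mul' _ _ enorm_ne_top]
        gcongr
        exact tF2_int (ha k)
    _ = (∑' k, ‖c k‖ₑ) * (6 * volume (Metric.ball (0:ℂ) 1)) := ENNReal.tsum_mul_right
    _ < ⊤ := by
        refine ENNReal.mul_lt_top ?_ (ENNReal.mul_lt_top (by simp) measure_ball_lt_top)
        simp only [← ofReal_norm]
        rw [← ENNReal.ofReal_tsum_of_nonneg (fun _ => norm_nonneg _) hc]
        exact ENNReal.ofReal_lt_top

lemma lp_summable (c : lp (fun _ : ℕ => ℂ) 1) : Summable fun k => ‖c k‖ := by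
  simpa using (lp.memℓp c).summable (by simp)

lemma lp_functional (b : ℕ → ℂ) (B : ℝ) (hb : ∀ k, ‖b k‖ ≤ B) :
    ∃ L : lp (fun _ : ℕ => ℂ) 1 →L[ℂ] ℂ, ∀ c, L c = ∑' k, c k * b k := by
  have hs : ∀ c : lp (fun _ : ℕ => ℂ) 1, Summable fun k => ‖c k * b k‖ := by
    intro c
    refine ((lp_summable c).mul_right B).of_nonneg_of_le (fun _ => norm_nonneg _) fun k => ?_
    rw [norm_mul]
    exact mul_le_mul_of_nonneg_left (hb k) (norm_nonneg _)
  let L0 : lp (fun _ : ℕ => ℂ) 1 →ₗ[ℂ] ℂ :=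
    { toFun := fun c => ∑' k, c k * b k
      map_add' := fun x y => by
        rw [← (hs x).of_norm.tsum_add (hs y).of_norm]
        congr 1; ext k
        simp [add_mul]
      map_smul' := fun m x => by
        simp [mul_assoc, tsum_mul_left] }
  refine ⟨L0.mkContinuous B fun c => ?_, fun c => rfl⟩
  change ‖∑' k, c k * b k‖ ≤ _
  refine (norm_tsum_le_tsum_norm (hs c)).trans ?_
  rw [lp.norm_eq_tsum_rpow (by simp)]
  simp only [ENNReal.toReal_one, Real.rpow_one, div_one]
  rw [mul_comm, ← tsum_mul_right]
  refine (hs c).tsum_le_tsum (fun k => ?_) ((lp_summable c).mul_right B)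
  rw [norm_mul]
  exact mul_le_mul_of_nonneg_left (hb k) (norm_nonneg _)

lemma bdd_of_forall {g : ℂ → ℂ} (hg : HolOn g)
    (H : ∀ f ∈ Besov1, ∃ C : ℝ, ∀ z ∈ Metric.ball (0:ℂ) 1,
      (1 - ‖z‖ ^ 2) * ‖g z * deriv f z‖ ≤ C) : g ∈ Hinf := by
  refine ⟨hg, ?_⟩
  by_contra hcon
  push Not at hcon
  obtain ⟨C0, hC0⟩ := (isCompact_closedBall (0:ℂ) (1/2)).exists_bound_of_continuousOn
    (hg.continuousOn.mono (closedBall_subset_ball (by norm_num)))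
  choose a ha hga using fun n : ℕ => hcon (max C0 n)
  have ha1 : ∀ n, ‖a n‖ < 1 := fun n => by simpa using ha n
  have ha2 : ∀ n, 1 / 2 < ‖a n‖ := by
    intro n
    by_contra h
    rw [not_lt] at h
    have := hC0 (a n) (by simpa using h)
    linarith [hga n, le_max_left C0 (n:ℝ)]
  have hL : ∀ n, ∃ L : lp (fun _ : ℕ => ℂ) 1 →L[ℂ] ℂ, ∀ c, L c =
      ∑' k, c k * ((((1 - ‖a n‖ ^ 2 : ℝ) : ℂ) * g (a n)) * tF1 (a k) (a n)) := by
    intro n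
    apply lp_functional _ (‖((1 - ‖a n‖ ^ 2 : ℝ) : ℂ) * g (a n)‖ * (2 * ((1 - ‖a n‖) ^ 3)⁻¹))
    intro k
    rw [norm_mul]
    exact mul_le_mul_of_nonneg_left (tF1_bd (ha1 k) (ha1 n)) (norm_nonneg _)
  choose L hL using hL
  obtain ⟨C', hC'⟩ := banach_steinhaus (g := L) (by
    intro c
    obtain ⟨hB, hD⟩ := series_besov ha1 (lp_summable c)
    obtain ⟨C, hC⟩ := H _ hB
    refine ⟨C, fun n => ?_⟩
    refine le_trans (le_of_eq ?_) (hC (a n) (ha n))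
    rw [hL, hD _ (ha n)]
    have hs : 0 ≤ 1 - ‖a n‖ ^ 2 := by nlinarith [ha1 n, norm_nonneg (a n)]
    rw [← Real.norm_of_nonneg hs, ← Complex.norm_real, ← norm_mul, ← mul_assoc, ← tsum_mul_left,
      Complex.norm_real, Real.norm_of_nonneg hs]
    congr 1
    refine tsum_congr fun k => ?_
    ring)
  obtain ⟨n, hn⟩ := exists_nat_gt C'
  have h1 := (L n).le_opNorm (lp.single 1 n (1:ℂ))
  rw [lp.norm_single (by simp), norm_one, mul_one, hL,
    tsum_eq_single n (fun k hk => by rw [lp.single_apply_ne _ _ _ hk, zero_mul]),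
    lp.single_apply_self, one_mul] at h1
  have hs : ((1 - ‖a n‖ ^ 2 : ℝ) : ℂ) ≠ 0 := by
    rw [Complex.ofReal_ne_zero]
    nlinarith [ha1 n, norm_nonneg (a n)]
  have e : ((1 - ‖a n‖ ^ 2 : ℝ) : ℂ) * g (a n) * tF1 (a n) (a n) = g (a n) * (2 * (starRingEnd ℂ) (a n)) := by
    rw [tF1, conj_mul_self', ← Complex.ofReal_one, ← Complex.ofReal_sub]
    field_simp
  rw [e, norm_mul, norm_mul, RCLike.norm_conj, Complex.norm_ofNat] at h1
  have h2 := hga n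
  have h3 := le_max_right C0 (n:ℝ)
  have h4 := ha2 n
  have h5 := hC' n
  nlinarith [norm_nonneg (g (a n))]


/-- For `g` holomorphic on the unit disc, (i) `I_g` maps `B¹` into the Bloch
space iff `g ∈ H^∞`; (ii) `M_g` maps `B¹` into the Bloch space iff `g ∈ H^∞`. -/
theorem stmt0 (g : ℂ → ℂ) (hg : HolOn g) :
    (MapsInto (Ig g) Besov1 Bloch ↔ g ∈ Hinf) ∧
    (MapsInto (Mg g) Besov1 Bloch ↔ g ∈ Hinf) := by
  have mulD : ∀ f ∈ Besov1, ∀ z ∈ Metric.ball (0:ℂ) 1,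
      deriv (Mg g f) z = deriv g z * f z + g z * deriv f z := by
    intro f hf z hz
    have hn := isOpen_ball.mem_nhds hz
    exact ((hg.differentiableAt hn).hasDerivAt.mul
      (DifferentiableOn.differentiableAt hf.1 hn).hasDerivAt).deriv
  have spos : ∀ z ∈ Metric.ball (0:ℂ) 1, 0 ≤ 1 - ‖z‖ ^ 2 := by
    intro z hz
    rw [mem_ball_zero_iff] at hz
    nlinarith [norm_nonneg z]
  refine ⟨⟨fun h => ?_, fun h f hf => ?_⟩, ⟨fun h => ?_, fun h f hf => ?_⟩⟩
  · refine bdd_of_forall hg fun f hf => ?_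
    obtain ⟨C, hC⟩ := (h f hf).2
    refine ⟨C, fun z hz => ?_⟩
    rw [← (Ig_deriv hg hf.1).2 z hz]
    exact hC z hz
  · obtain ⟨hI, hD⟩ := Ig_deriv hg hf.1
    obtain ⟨C, hC⟩ := h.2
    obtain ⟨B, hB⟩ := besov_bdd hf
    refine ⟨hI, C * (4 * B), fun z hz => ?_⟩
    have hb := bdd_bloch hf.1 hB z hz
    rw [hD z hz, norm_mul, mul_left_comm]
    exact mul_le_mul (hC z hz) hb (mul_nonneg (spos z hz) (norm_nonneg _))
      ((norm_nonneg _).trans (hC z hz))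
  · have h1 : (fun _ => 1 : ℂ → ℂ) ∈ Besov1 := by
      refine ⟨differentiableOn_const _, ?_⟩
      simp
    obtain ⟨C1, hC1⟩ := (h _ h1).2
    refine bdd_of_forall hg fun f hf => ?_
    obtain ⟨C, hC⟩ := (h f hf).2
    obtain ⟨B, hB⟩ := besov_bdd hf
    refine ⟨C + C1 * B, fun z hz => ?_⟩
    have e1 := hC1 z hz
    rw [mulD _ h1 z hz] at e1
    simp only [mul_one, deriv_const, mul_zero, add_zero] at e1
    have e2 := hC z hz
    rw [mulD f hf z hz] at e2
    have e3 : ‖g z * deriv f z‖ ≤ ‖deriv g z * f z + g z * deriv f z‖ + ‖deriv g z‖ * ‖f z‖ := by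
      rw [← norm_mul]
      have := norm_sub_le (deriv g z * f z + g z * deriv f z) (deriv g z * f z)
      rwa [add_sub_cancel_left] at this
    have e4 := mul_le_mul_of_nonneg_left e3 (spos z hz)
    have e5 := mul_le_mul e1 (hB z hz) (norm_nonneg _)
      ((mul_nonneg (spos z hz) (norm_nonneg _)).trans e1)
    linarith
  · obtain ⟨C, hC⟩ := h.2
    obtain ⟨B, hB⟩ := besov_bdd hf
    refine ⟨DifferentiableOn.mul hg hf.1, 4 * C * B + C * (4 * B), fun z hz => ?_⟩
    have b1 := bdd_bloch hg hC z hz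
    have b2 := bdd_bloch hf.1 hB z hz
    rw [mulD f hf z hz]
    have e3 := norm_add_le (deriv g z * f z) (g z * deriv f z)
    rw [norm_mul, norm_mul] at e3
    have e4 := mul_le_mul_of_nonneg_left e3 (spos z hz)
    have e5 := mul_le_mul b1 (hB z hz) (norm_nonneg _)
      ((mul_nonneg (spos z hz) (norm_nonneg _)).trans b1)
    have e6 := mul_le_mul (hC z hz) b2 (mul_nonneg (spos z hz) (norm_nonneg _))
      ((norm_nonneg _).trans (hC z hz))
    linarith
end

section
/- Suppose 1 < p < ∞ and let g be holomorphic on the unit disc D. Then the operator I_g maps the Besov space B^p into the Bloch space 𝓑 if and only if g ∈ H^∞. -/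
open MeasureTheory Metric Complex Real Filter Set

open scoped ENNReal

lemma aux_pw (x s : ℝ) (h1 : 1 ≤ x) (h3 : x ≤ 3) : x ^ s ≤ 3 ^ |s| := by
  calc x ^ s ≤ x ^ |s| := Real.rpow_le_rpow_of_exponent_le h1 (le_abs_self s)
    _ ≤ 3 ^ |s| := Real.rpow_le_rpow (by linarith) h3 (abs_nonneg s)

lemma aux_dA (F : ℂ → ℝ≥0∞) :
    ∫⁻ z in Metric.ball (0:ℂ) 1, F z ∂dA < ⊤ ↔ ∫⁻ z in Metric.ball (0:ℂ) 1, F z < ⊤ := by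
  unfold dA
  rw [Measure.restrict_smul, lintegral_smul_measure, smul_eq_mul]
  have h0 : (ENNReal.ofReal π)⁻¹ ≠ 0 := by simp
  have h1 : (ENNReal.ofReal π)⁻¹ ≠ ⊤ := by simp [Real.pi_pos]
  constructor
  · intro h
    by_contra hc
    simp only [not_lt, top_le_iff] at hc
    rw [hc, ENNReal.mul_top h0] at h
    exact lt_irrefl _ h
  · intro h
    exact ENNReal.mul_lt_top h1.lt_top h

lemma aux_hasDerivAt_Ig (g f : ℂ → ℂ) (hg : HolOn g) (hf : HolOn f) (z : ℂ)
    (hz : z ∈ Metric.ball (0:ℂ) 1) : HasDerivAt (Ig g f) (g z * deriv f z) z := by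
  have hh : DifferentiableOn ℂ (fun z => g z * deriv f z) (Metric.ball (0:ℂ) 1) :=
    hg.mul (hf.deriv Metric.isOpen_ball)
  obtain ⟨H, hH0, hH⟩ := hh.isExactOn_ball.with_val_at 0 0
  have key : ∀ w ∈ Metric.ball (0:ℂ) 1, Ig g f w = H w := by
    intro w hw
    have hmem : ∀ t ∈ Set.uIcc (0:ℝ) 1, (t:ℂ) * w ∈ Metric.ball (0:ℂ) 1 := by
      intro t ht
      rw [Set.uIcc_of_le zero_le_one] at ht
      simp only [mem_ball_zero_iff, norm_mul, Complex.norm_real, Real.norm_eq_abs] at hw ⊢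
      rw [abs_of_nonneg ht.1]
      nlinarith [ht.1, ht.2, norm_nonneg w]
    have hd : ∀ t ∈ Set.uIcc (0:ℝ) 1, HasDerivAt (fun t : ℝ => H ((t:ℂ) * w))
        ((g ((t:ℂ) * w) * deriv f ((t:ℂ) * w)) * w) t := by
      intro t ht
      have h1 := hH _ (hmem t ht)
      have h2 : HasDerivAt (fun t : ℝ => (t:ℂ) * w) w t := by
        simpa using (Complex.ofRealCLM.hasDerivAt (x := t)).mul_const w
      exact HasDerivAt.comp (h₂ := H) (h := fun t : ℝ => (t:ℂ) * w) t h1 h2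
    have hc : ContinuousOn (fun t : ℝ => (g ((t:ℂ) * w) * deriv f ((t:ℂ) * w)) * w)
        (Set.uIcc (0:ℝ) 1) := by
      refine ContinuousOn.mul ?_ continuousOn_const
      exact hh.continuousOn.comp (f := fun t : ℝ => (t:ℂ) * w) (by fun_prop) hmem
    have := intervalIntegral.integral_eq_sub_of_hasDerivAt hd hc.intervalIntegrable
    rw [intervalIntegral.integral_mul_const] at this
    simp only [Complex.ofReal_one, one_mul, Complex.ofReal_zero, zero_mul, hH0, sub_zero] at this
    rw [← this, Ig, mul_comm]
  refine (hH z hz).congr_of_eventuallyEq ?_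
  filter_upwards [Metric.isOpen_ball.mem_nhds hz] with w hw using key w hw

lemma aux_circle (h : ℂ → ℂ) (z : ℂ) (R r : ℝ) (hr : 0 < r) (hrR : r < R)
    (hh : DifferentiableOn ℂ h (Metric.ball z R)) :
    ENNReal.ofReal (2 * π) * ‖h z‖ₑ ≤
      ∫⁻ θ in Set.Ioo (-π) π, ‖h (z + r * (Real.cos θ + Real.sin θ * Complex.I))‖ₑ := by
  have hd : DiffContOnCl ℂ h (Metric.ball z |r|) := by
    rw [abs_of_pos hr]
    exact (hh.mono (Metric.closedBall_subset_ball hrR)).diffContOnCl_ball (subset_refl _)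
  have h1 := hd.circleAverage
  rw [circleAverage_eq_integral_add (-π), intervalIntegral.integral_comp_add_right
    (fun θ => h (circleMap z r θ))] at h1
  have h2 : (0:ℝ) + -π = -π := by ring
  have h3 : 2 * π + -π = π := by ring
  rw [h2, h3] at h1
  have hpi := Real.pi_pos
  have h4 : ∫ θ in (-π)..π, h (circleMap z r θ) = (2 * π) • h z := by
    rw [← h1, smul_smul, mul_inv_cancel₀ (by positivity), one_smul]
  have h5 : ‖∫ θ in (-π)..π, h (circleMap z r θ)‖ₑ = ENNReal.ofReal (2 * π) * ‖h z‖ₑ := by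
    rw [h4, enorm_smul, Real.enorm_eq_ofReal (by positivity)]
  rw [← h5, intervalIntegral.integral_of_le (by linarith), integral_Ioc_eq_integral_Ioo]
  refine (enorm_integral_le_lintegral_enorm _).trans (le_of_eq ?_)
  simp only [circleMap, Complex.exp_mul_I, Complex.ofReal_cos, Complex.ofReal_sin]

lemma aux_area (h : ℂ → ℂ) (hm : Measurable h) (z : ℂ) (R : ℝ) (hR : 0 < R)
    (hh : DifferentiableOn ℂ h (Metric.ball z R)) :
    ENNReal.ofReal (π * R ^ 2) * ‖h z‖ₑ ≤ ∫⁻ w in Metric.ball z R, ‖h w‖ₑ := by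
  set F : ℂ → ℝ≥0∞ := (Metric.ball (0:ℂ) R).indicator (fun w => ‖h (z + w)‖ₑ) with hF
  have hFm : Measurable F := by
    apply Measurable.indicator _ Metric.isOpen_ball.measurableSet
    exact (hm.comp (measurable_const_add z)).enorm
  have e1 : ∫⁻ w in Metric.ball z R, ‖h w‖ₑ = ∫⁻ w, F w := by
    rw [← lintegral_indicator Metric.isOpen_ball.measurableSet,
      ← lintegral_add_left_eq_self _ z]
    congr 1
    ext w
    simp [hF, Set.indicator]
  rw [e1, ← Complex.lintegral_comp_polarCoord_symm]
  have hpm : Measurable (fun p : ℝ × ℝ => ENNReal.ofReal p.1 • F (Complex.polarCoord.symm p)) := by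
    simp only [Complex.polarCoord_symm_apply, smul_eq_mul]
    apply Measurable.mul (by fun_prop)
    exact hFm.comp (by fun_prop)
  have e2 : polarCoord.target = Set.Ioi (0 : ℝ) ×ˢ Set.Ioo (-π) π := rfl
  rw [e2, Measure.volume_eq_prod, ← Measure.prod_restrict, lintegral_prod _ hpm.aemeasurable]
  calc ENNReal.ofReal (π * R ^ 2) * ‖h z‖ₑ
      = ∫⁻ r in Set.Ioo 0 R, ENNReal.ofReal r * (ENNReal.ofReal (2 * π) * ‖h z‖ₑ) := by
        rw [lintegral_mul_const _ (by fun_prop)]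
        have : ∫⁻ r in Set.Ioo 0 R, ENNReal.ofReal r = ENNReal.ofReal (R ^ 2 / 2) := by
          rw [← ofReal_integral_eq_lintegral_ofReal]
          · rw [← integral_Ioc_eq_integral_Ioo, ← intervalIntegral.integral_of_le hR.le]
            simp
          · exact (continuous_id.integrableOn_Icc (a := 0) (b := R)).mono_set Set.Ioo_subset_Icc_self
          · filter_upwards [ae_restrict_mem measurableSet_Ioo] with r hr using hr.1.le
        rw [this, ← mul_assoc, ← ENNReal.ofReal_mul (by positivity)]
        congr 2
        ring
    _ ≤ ∫⁻ r in Set.Ioo 0 R, ∫⁻ θ in Set.Ioo (-π) π,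
          ENNReal.ofReal r • F (Complex.polarCoord.symm (r, θ)) := by
        refine setLIntegral_mono' measurableSet_Ioo ?_
        intro r hr
        simp only [smul_eq_mul]
        rw [lintegral_const_mul' _ _ ENNReal.ofReal_ne_top]
        gcongr
        refine (aux_circle h z R r hr.1 hr.2 hh).trans (le_of_eq ?_)
        congr 1
        ext θ
        have : Complex.polarCoord.symm (r, θ) ∈ Metric.ball (0:ℂ) R := by
          rw [mem_ball_zero_iff, Complex.norm_polarCoord_symm]
          simpa [abs_of_pos hr.1] using hr.2
        rw [hF, Set.indicator_of_mem this, Complex.polarCoord_symm_apply]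
    _ ≤ _ := lintegral_mono_set Set.Ioo_subset_Ioi_self

lemma aux_besov_bloch (p : ℝ) (hp : 1 < p) (f : ℂ → ℂ) (hf : f ∈ Besov p) :
    ∃ C : ℝ, ∀ z ∈ Metric.ball (0:ℂ) 1, (1 - ‖z‖ ^ 2) * ‖deriv f z‖ ≤ C := by
  obtain ⟨hf1, hf2⟩ := hf
  rw [aux_dA] at hf2
  set I := ∫⁻ z in Metric.ball (0:ℂ) 1,
      ENNReal.ofReal ((1 - ‖z‖) ^ (p - 2) * ‖deriv f z‖ ^ p) with hI
  set K : ℝ := 3 ^ |2 - p| with hK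
  have hK0 : 0 < K := by positivity
  have hpi := Real.pi_pos
  refine ⟨4 * (1 + K * I.toReal / π), ?_⟩
  intro z hz
  rw [mem_ball_zero_iff] at hz
  set R := (1 - ‖z‖) / 2 with hRdef
  have hR : 0 < R := by rw [hRdef]; linarith
  have hsub : Metric.ball z R ⊆ Metric.ball (0:ℂ) 1 := by
    intro w hw
    rw [mem_ball_iff_norm] at hw
    rw [mem_ball_zero_iff]
    have := norm_sub_norm_le w z
    linarith
  have hd : DifferentiableOn ℂ (deriv f) (Metric.ball z R) :=
    (hf1.deriv Metric.isOpen_ball).mono hsub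
  have ha := aux_area (deriv f) (measurable_deriv f) z R hR hd
  have hb : ENNReal.ofReal R * ∫⁻ w in Metric.ball z R, ‖deriv f w‖ₑ ≤
      ENNReal.ofReal (π * R ^ 2) + ENNReal.ofReal (R ^ 2 * K) * I := by
    rw [← lintegral_const_mul' _ _ ENNReal.ofReal_ne_top]
    calc ∫⁻ w in Metric.ball z R, ENNReal.ofReal R * ‖deriv f w‖ₑ
        ≤ ∫⁻ w in Metric.ball z R, (1 + ENNReal.ofReal (R ^ 2 * K) *
            ENNReal.ofReal ((1 - ‖w‖) ^ (p - 2) * ‖deriv f w‖ ^ p)) := by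
          refine setLIntegral_mono' Metric.isOpen_ball.measurableSet ?_
          intro w hw
          rw [mem_ball_iff_norm] at hw
          have h1 := abs_norm_sub_norm_le w z
          have h2 := abs_le.1 h1
          have hs1 : R ≤ 1 - ‖w‖ := by linarith [h2.2]
          have hs3 : 1 - ‖w‖ ≤ 3 * R := by linarith [h2.1]
          set s := 1 - ‖w‖ with hs
          have hs0 : 0 < s := by linarith
          rw [← ofReal_norm, ← ENNReal.ofReal_mul hR.le, ← ENNReal.ofReal_one,
            ← ENNReal.ofReal_mul (by positivity), ← ENNReal.ofReal_add (by positivity) (by positivity)]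
          apply ENNReal.ofReal_le_ofReal
          set x := ‖deriv f w‖ with hx
          have hx0 : 0 ≤ x := norm_nonneg _
          have y1 : R * x ≤ 1 + (R * x) ^ p := by
            rcases le_total (R * x) 1 with h | h
            · have : 0 ≤ (R * x) ^ p := by positivity
              linarith
            · have := Real.rpow_le_rpow_of_exponent_le h hp.le
              rw [Real.rpow_one] at this
              linarith
          have y2 : R ^ (p - 2) ≤ K * s ^ (p - 2) := by
            have := aux_pw (s / R) (2 - p) (by rw [le_div_iff₀ hR]; linarith)
              (by rw [div_le_iff₀ hR]; linarith)
            rw [Real.div_rpow hs0.le hR.le, div_le_iff₀ (by positivity)] at this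
            have e1 : s ^ (2 - p) = (s ^ (p - 2))⁻¹ := by rw [← Real.rpow_neg hs0.le]; ring_nf
            have e2 : R ^ (2 - p) = (R ^ (p - 2))⁻¹ := by rw [← Real.rpow_neg hR.le]; ring_nf
            rw [e1, e2] at this
            have a1 : 0 < s ^ (p - 2) := by positivity
            have a2 : 0 < R ^ (p - 2) := by positivity
            rw [inv_eq_one_div, ← div_eq_mul_inv, div_le_div_iff₀ a1 a2] at this
            linarith
          have y3 : (R * x) ^ p = R ^ 2 * R ^ (p - 2) * x ^ p := by
            rw [Real.mul_rpow hR.le hx0, ← Real.rpow_natCast R 2, ← Real.rpow_add hR]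
            norm_num
          have y4 : R ^ 2 * R ^ (p - 2) * x ^ p ≤ R ^ 2 * (K * s ^ (p - 2)) * x ^ p := by
            gcongr
          calc R * x ≤ 1 + (R * x) ^ p := y1
            _ ≤ 1 + R ^ 2 * (K * s ^ (p - 2)) * x ^ p := by rw [y3]; linarith
            _ = _ := by ring
      _ ≤ _ := by
          rw [lintegral_add_left measurable_const, lintegral_const_mul' _ _ ENNReal.ofReal_ne_top]
          gcongr
          · rw [setLIntegral_const, one_mul, Complex.volume_ball]
            apply le_of_eq
            rw [ENNReal.ofReal_mul hpi.le, mul_comm, ENNReal.ofReal_pow hR.le]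
            congr 1
            rw [← ENNReal.ofReal_coe_nnreal]
            rfl
          · exact lintegral_mono_set hsub
  have hc : ENNReal.ofReal R * (ENNReal.ofReal (π * R ^ 2) * ‖deriv f z‖ₑ) ≤
      ENNReal.ofReal (π * R ^ 2) + ENNReal.ofReal (R ^ 2 * K) * I :=
    (mul_le_mul_right ha _).trans hb
  have hI' : I = ENNReal.ofReal I.toReal := (ENNReal.ofReal_toReal hf2.ne).symm
  have hI0 : 0 ≤ I.toReal := ENNReal.toReal_nonneg
  rw [hI', ← ofReal_norm, ← ENNReal.ofReal_mul (by positivity),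
    ← ENNReal.ofReal_mul (by positivity), ← ENNReal.ofReal_mul (by positivity),
    ← ENNReal.ofReal_add (by positivity) (by positivity),
    ENNReal.ofReal_le_ofReal_iff (by positivity)] at hc
  have hd2 : R * ‖deriv f z‖ ≤ 1 + K * I.toReal / π := by
    have e : π * R ^ 2 * (1 + K * I.toReal / π) = π * R ^ 2 + R ^ 2 * K * I.toReal := by
      field_simp
    have : π * R ^ 2 * (R * ‖deriv f z‖) ≤ π * R ^ 2 * (1 + K * I.toReal / π) := by
      rw [e]; linarith
    exact le_of_mul_le_mul_left this (by positivity)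
  have : (1 - ‖z‖ ^ 2) ≤ 4 * R := by
    rw [hRdef]; nlinarith [norm_nonneg z]
  calc (1 - ‖z‖ ^ 2) * ‖deriv f z‖ ≤ 4 * R * ‖deriv f z‖ := by gcongr
    _ ≤ _ := by linarith

lemma aux_den (a z : ℂ) (ha : ‖a‖ < 1) (hz : ‖z‖ < 1) : 1 - (starRingEnd ℂ) a * z ≠ 0 := by
  intro h
  have h1 : (1:ℂ) = (starRingEnd ℂ) a * z := by linear_combination h
  have h2 : ‖(1:ℂ)‖ = ‖a‖ * ‖z‖ := by rw [h1, norm_mul, RCLike.norm_conj]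
  rw [norm_one] at h2
  nlinarith [norm_nonneg a, norm_nonneg z]

lemma aux_phi_deriv (a z : ℂ) (ha : ‖a‖ < 1) (hz : ‖z‖ < 1) :
    HasDerivAt (phi a) ((((‖a‖ ^ 2 - 1 : ℝ)) : ℂ) / (1 - (starRingEnd ℂ) a * z) ^ 2) z := by
  have hden := aux_den a z ha hz
  have h1 : HasDerivAt (fun z : ℂ => a - z) (-1) z := by
    simpa using (hasDerivAt_id z).const_sub a
  have h2 : HasDerivAt (fun z : ℂ => 1 - (starRingEnd ℂ) a * z) (-(starRingEnd ℂ) a) z := by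
    simpa using ((hasDerivAt_id z).const_mul ((starRingEnd ℂ) a)).const_sub 1
  have h3 := h1.fun_div h2 hden
  refine h3.congr_deriv ?_
  congr 1
  have : (starRingEnd ℂ) a * a = ((‖a‖ ^ 2 : ℝ) : ℂ) := by
    rw [← Complex.normSq_eq_conj_mul_self, Complex.normSq_eq_norm_sq]
  push_cast at this ⊢
  linear_combination this

lemma aux_phi_norm (a z : ℂ) (ha : ‖a‖ < 1) (hz : ‖z‖ < 1) :
    1 - ‖phi a z‖ ^ 2 = (1 - ‖z‖ ^ 2) * ‖deriv (phi a) z‖ := by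
  have hden := aux_den a z ha hz
  have hn : 0 < ‖1 - (starRingEnd ℂ) a * z‖ := norm_pos_iff.2 hden
  rw [(aux_phi_deriv a z ha hz).deriv, norm_div, norm_pow, Complex.norm_real, Real.norm_eq_abs,
    abs_of_nonpos (by nlinarith [norm_nonneg a]), phi, norm_div, div_pow]
  rw [one_sub_div (by positivity), ← mul_div_assoc]
  congr 1
  simp only [← Complex.normSq_eq_norm_sq, Complex.normSq_apply]
  simp
  ring

lemma aux_phi_lt (a z : ℂ) (ha : ‖a‖ < 1) (hz : ‖z‖ < 1) : ‖phi a z‖ < 1 := by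
  have h := aux_phi_norm a z ha hz
  have hd : 0 < ‖deriv (phi a) z‖ := by
    rw [(aux_phi_deriv a z ha hz).deriv]
    apply norm_pos_iff.2
    apply div_ne_zero
    · norm_cast
      nlinarith [norm_nonneg a]
    · exact pow_ne_zero _ (aux_den a z ha hz)
  have : 0 < 1 - ‖z‖ ^ 2 := by nlinarith [norm_nonneg z]
  have : 0 < (1 - ‖z‖ ^ 2) * ‖deriv (phi a) z‖ := by positivity
  nlinarith [norm_nonneg (phi a z)]

lemma aux_phi_inj (a : ℂ) (ha : ‖a‖ < 1) : Set.InjOn (phi a) (Metric.ball 0 1) := by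
  intro z hz w hw h
  rw [mem_ball_zero_iff] at hz hw
  have h1 := aux_den a z ha hz
  have h2 := aux_den a w ha hw
  unfold phi at h
  rw [div_eq_div_iff h1 h2] at h
  have h3 := aux_den a a ha ha
  have : (z - w) * (1 - (starRingEnd ℂ) a * a) = 0 := by linear_combination -h
  rcases mul_eq_zero.1 this with h | h
  · exact sub_eq_zero.1 h
  · exact absurd h h3

lemma aux_det (c : ℂ) : ((ContinuousLinearMap.toSpanSingleton ℂ c).restrictScalars ℝ : ℂ →L[ℝ] ℂ).det
    = ‖c‖ ^ 2 := by
  simp [ContinuousLinearMap.det, LinearMap.det_restrictScalars,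
      Algebra.norm_complex_eq, Complex.normSq_eq_norm_sq]

lemma aux_radial (p : ℝ) (hp : 1 < p) :
    ∫⁻ z in Metric.ball (0:ℂ) 1, ENNReal.ofReal ((1 - ‖z‖) ^ (p - 2)) < ⊤ := by
  have h1 : IntegrableOn (fun x : ℂ => (1 - ‖x‖) ^ (p - 2)) (Metric.ball (0:ℂ) 1) := by
    rw [integrableOn_fun_norm_addHaar volume (f := fun y : ℝ => (1 - y) ^ (p - 2))]
    have h2 : IntervalIntegrable (fun x : ℝ => x ^ (p - 2)) volume 0 1 :=
      intervalIntegral.intervalIntegrable_rpow' (by linarith)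
    have h3 := (h2.comp_sub_left 1).symm
    simp only [sub_zero, sub_self] at h3
    have h4 : IntegrableOn (fun y : ℝ => (1 - y) ^ (p - 2)) (Set.Ioc 0 1) := by
      rwa [intervalIntegrable_iff_integrableOn_Ioc_of_le zero_le_one] at h3
    have h5 : IntegrableOn (fun y : ℝ => (1 - y) ^ (p - 2)) (Set.Ioo 0 1) :=
      h4.mono_set Set.Ioo_subset_Ioc_self
    refine Integrable.mono' h5 ?_ ?_
    · apply Measurable.aestronglyMeasurable
      fun_prop
    · filter_upwards [ae_restrict_mem measurableSet_Ioo] with y hy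
      rw [norm_smul, norm_pow, Real.norm_eq_abs, abs_of_pos hy.1, Real.norm_eq_abs,
        abs_of_nonneg (Real.rpow_nonneg (by linarith [hy.2]) _)]
      have : y ^ (Module.finrank ℝ ℂ - 1) ≤ 1 := pow_le_one₀ hy.1.le hy.2.le
      have h0 : 0 ≤ (1 - y) ^ (p - 2) := Real.rpow_nonneg (by linarith [hy.2]) _
      nlinarith
  exact h1.lintegral_lt_top

/-- uniform Besov bound for the Möbius maps -/
lemma aux_phi_besov (p : ℝ) (hp : 1 < p) : ∃ M : ℝ≥0∞, M < ⊤ ∧ ∀ a : ℂ, ‖a‖ < 1 →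
    ∫⁻ z in Metric.ball (0:ℂ) 1,
      ENNReal.ofReal ((1 - ‖z‖) ^ (p - 2) * ‖deriv (phi a) z‖ ^ p) ≤ M := by
  set K : ℝ := 3 ^ |2 - p| with hK
  set K' : ℝ := 3 ^ |p - 2| with hK'
  have hK0 : 0 < K := by positivity
  have hK0' : 0 < K' := by positivity
  refine ⟨ENNReal.ofReal (K * K') * ∫⁻ z in Metric.ball (0:ℂ) 1,
    ENNReal.ofReal ((1 - ‖z‖) ^ (p - 2)),
    ENNReal.mul_lt_top ENNReal.ofReal_lt_top (aux_radial p hp), ?_⟩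
  intro a ha
  have hcv := lintegral_image_eq_lintegral_abs_det_fderiv_mul (volume : Measure ℂ)
    (s := Metric.ball (0:ℂ) 1) (f := phi a)
    (f' := fun z => (ContinuousLinearMap.toSpanSingleton ℂ (deriv (phi a) z)).restrictScalars ℝ)
    Metric.isOpen_ball.measurableSet
    (by
      intro z hz
      rw [mem_ball_zero_iff] at hz
      have h1 := (aux_phi_deriv a z ha hz).differentiableAt.hasDerivAt.hasFDerivAt
      exact (h1.restrictScalars ℝ).hasFDerivWithinAt)
    (aux_phi_inj a ha) (fun w => ENNReal.ofReal ((1 - ‖w‖) ^ (p - 2)))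
  simp only [aux_det] at hcv
  calc ∫⁻ z in Metric.ball (0:ℂ) 1,
      ENNReal.ofReal ((1 - ‖z‖) ^ (p - 2) * ‖deriv (phi a) z‖ ^ p)
      ≤ ∫⁻ z in Metric.ball (0:ℂ) 1, ENNReal.ofReal (K * K') *
        (ENNReal.ofReal |‖deriv (phi a) z‖ ^ 2| * ENNReal.ofReal ((1 - ‖phi a z‖) ^ (p - 2))) := by
        refine setLIntegral_mono' Metric.isOpen_ball.measurableSet ?_
        intro z hz
        rw [mem_ball_zero_iff] at hz
        have hl := aux_phi_lt a z ha hz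
        have hn := aux_phi_norm a z ha hz
        set u := ‖phi a z‖
        set x := ‖deriv (phi a) z‖
        set r := ‖z‖
        have hu0 : 0 ≤ u := norm_nonneg _
        have hx0 : 0 ≤ x := norm_nonneg _
        have hr0 : 0 ≤ r := norm_nonneg _
        have hxp : 0 < x := by
          rcases hx0.lt_or_eq with h | h
          · exact h
          · rw [← h] at hn
            nlinarith
        have hr1 : 0 < 1 - r := by linarith
        have hu1 : 0 < 1 - u := by linarith
        rw [abs_of_nonneg (by positivity), ← ENNReal.ofReal_mul (by positivity),
          ← ENNReal.ofReal_mul (by positivity)]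
        apply ENNReal.ofReal_le_ofReal
        have e1 : x ^ p = x ^ 2 * x ^ (p - 2) := by
          rw [← Real.rpow_natCast x 2, ← Real.rpow_add hxp]
          norm_num
        have e2 : (1 - r) * x = (1 - u) * ((1 + u) / (1 + r)) := by
          have : (1 + r) ≠ 0 := by positivity
          field_simp
          linarith
        have e3 : (1 - r) ^ (p - 2) * x ^ (p - 2) =
            (1 - u) ^ (p - 2) * ((1 + u) ^ (p - 2) * (1 + r) ^ (2 - p)) := by
          rw [← Real.mul_rpow hr1.le hx0, e2, Real.mul_rpow hu1.le (by positivity),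
            Real.div_rpow (by positivity) (by positivity), div_eq_mul_inv, ← Real.rpow_neg (by positivity)]
          ring_nf
        have b1 := aux_pw (1 + u) (p - 2) (by linarith) (by linarith)
        have b2 := aux_pw (1 + r) (2 - p) (by linarith) (by linarith)
        have b3 : (1 + u) ^ (p - 2) * (1 + r) ^ (2 - p) ≤ K' * K := by
          gcongr
        calc (1 - r) ^ (p - 2) * x ^ p = ((1 - r) ^ (p - 2) * x ^ (p - 2)) * x ^ 2 := by
              rw [e1]; ring
          _ ≤ ((1 - u) ^ (p - 2) * (K' * K)) * x ^ 2 := by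
              rw [e3]; gcongr
          _ = _ := by ring
    _ = ENNReal.ofReal (K * K') * ∫⁻ z in phi a '' Metric.ball (0:ℂ) 1,
        ENNReal.ofReal ((1 - ‖z‖) ^ (p - 2)) := by
        rw [lintegral_const_mul' _ _ ENNReal.ofReal_ne_top, hcv]
    _ ≤ _ := by
        gcongr
        rintro _ ⟨z, hz, rfl⟩
        rw [mem_ball_zero_iff] at hz ⊢
        exact aux_phi_lt a z ha hz

/-- adaptive choice of signs -/
noncomputable def auxSig (M : ℕ → ℕ → ℂ) : ℕ → ℂ
  | k =>
    open scoped Classical in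
    if ‖M k k‖ ≤ ‖(∑ j : Fin k, auxSig M j.1 * M j.1 k) + M k k‖ then 1 else -1
  termination_by k => k
  decreasing_by exact j.2

lemma aux_sig_norm (M : ℕ → ℕ → ℂ) (k : ℕ) : ‖auxSig M k‖ = 1 := by
  rw [auxSig]
  split_ifs <;> simp

lemma aux_sig_sum (M : ℕ → ℕ → ℂ) (k : ℕ) :
    ‖M k k‖ ≤ ‖∑ j ∈ Finset.range (k + 1), auxSig M j * M j k‖ := by
  rw [Finset.sum_range_succ]
  have h : ∑ j ∈ Finset.range k, auxSig M j * M j k = ∑ j : Fin k, auxSig M j.1 * M j.1 k :=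
    Finset.sum_range _
  set S := ∑ j ∈ Finset.range k, auxSig M j * M j k with hS
  rw [auxSig, ← h]
  split_ifs with hc
  · simpa using hc
  · push Not at hc
    have h1 : ‖(2:ℂ) * M k k‖ ≤ ‖S + M k k‖ + ‖S + -1 * M k k‖ := by
      have : (2:ℂ) * M k k = (S + M k k) - (S + -1 * M k k) := by ring
      rw [this]
      exact norm_sub_le _ _
    rw [norm_mul] at h1
    norm_num at h1 ⊢
    linarith

lemma aux_holder (p : ℝ) (hp : 1 < p) : ∃ L : ℝ≥0∞, L < ⊤ ∧ ∀ x : ℕ → ℝ≥0∞,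
    (∑' k, (2⁻¹ ^ k * x k) * 2⁻¹ ^ k) ^ p ≤ L * ∑' k, 2⁻¹ ^ k * x k ^ p := by
  have hq := Real.HolderConjugate.conjExponent hp
  set q := p.conjExponent
  have hs : ∑' k : ℕ, (2⁻¹ : ℝ≥0∞) ^ k = 2 := by
    rw [ENNReal.tsum_geometric]
    norm_num
  have hle : ∀ (s : ℝ), 1 ≤ s → ∀ k : ℕ, ((2⁻¹ : ℝ≥0∞) ^ k) ^ s ≤ 2⁻¹ ^ k := by
    intro s hs k
    have : (2⁻¹ : ℝ≥0∞) ^ k ≤ 1 := pow_le_one₀ (by simp) (by simp)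
    calc _ ≤ ((2⁻¹ : ℝ≥0∞) ^ k) ^ (1:ℝ) := ENNReal.rpow_le_rpow_of_exponent_ge this hs
      _ = _ := ENNReal.rpow_one _
  refine ⟨((2:ℝ≥0∞) ^ (1 / q)) ^ p, ?_, ?_⟩
  · apply ENNReal.rpow_lt_top_of_nonneg (by linarith)
    apply ENNReal.rpow_ne_top_of_nonneg
    · exact one_div_nonneg.2 hq.symm.nonneg
    · simp
  intro x
  have h := ENNReal.lintegral_mul_le_Lp_mul_Lq (Measure.count : Measure ℕ) hq
    (f := fun k => 2⁻¹ ^ k * x k) (g := fun k => 2⁻¹ ^ k)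
    (measurable_of_countable _).aemeasurable (measurable_of_countable _).aemeasurable
  simp only [lintegral_count, Pi.mul_apply] at h
  have hp0 : 0 ≤ p := by linarith
  calc _ ≤ _ := ENNReal.rpow_le_rpow h hp0
    _ = (∑' k, (2⁻¹ ^ k * x k) ^ p) * ((∑' k : ℕ, ((2⁻¹ : ℝ≥0∞) ^ k) ^ q) ^ (1 / q)) ^ p := by
        rw [ENNReal.mul_rpow_of_nonneg _ _ hp0, ← ENNReal.rpow_mul, one_div_mul_cancel (by linarith),
          ENNReal.rpow_one]
    _ ≤ (∑' k, 2⁻¹ ^ k * x k ^ p) * ((2:ℝ≥0∞) ^ (1 / q)) ^ p := by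
        gcongr with k
        · rw [ENNReal.mul_rpow_of_nonneg _ _ hp0]
          gcongr
          exact hle p hp.le k
        · exact one_div_nonneg.2 hq.symm.nonneg
        · refine le_trans ?_ hs.le
          exact ENNReal.tsum_le_tsum (hle q hq.symm.lt.le)
    _ = _ := mul_comm _ _

lemma aux_necessity (p : ℝ) (hp : 1 < p) (g : ℂ → ℂ) (hg : HolOn g)
    (hmap : MapsInto (Ig g) (Besov p) Bloch) :
    ∃ C : ℝ, ∀ z ∈ Metric.ball (0:ℂ) 1, ‖g z‖ ≤ C := by
  by_contra hnb
  push Not at hnb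
  choose a0 ha0 hga0 using hnb
  set A : ℕ → ℂ := fun k => a0 (k * 4 ^ k) with hA
  have hAb : ∀ k, A k ∈ Metric.ball (0:ℂ) 1 := fun k => ha0 _
  have hAn : ∀ k, ‖A k‖ < 1 := fun k => mem_ball_zero_iff.1 (hAb k)
  have hgA : ∀ k : ℕ, (k:ℝ) * 4 ^ k < ‖g (A k)‖ := fun k => hga0 _
  set M : ℕ → ℕ → ℂ := fun j k => (1/4) ^ j * deriv (phi (A j)) (A k) with hM
  set σ := auxSig M with hσ
  have hσn : ∀ k, ‖σ k‖ = 1 := aux_sig_norm M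
  set F : ℕ → ℂ → ℂ := fun j z => (σ j * (1/4) ^ j) * phi (A j) z with hF
  have hu : Summable (fun j : ℕ => (1/4 : ℝ) ^ j) :=
    summable_geometric_of_lt_one (by norm_num) (by norm_num)
  have hcn : ∀ j : ℕ, ‖σ j * (1/4 : ℂ) ^ j‖ = (1/4 : ℝ) ^ j := by
    intro j
    rw [norm_mul, hσn, norm_pow, one_mul]
    norm_num
  have hphid : ∀ j, ∀ z ∈ Metric.ball (0:ℂ) 1, DifferentiableAt ℂ (phi (A j)) z := fun j z hz =>
    (aux_phi_deriv _ z (hAn j) (mem_ball_zero_iff.1 hz)).differentiableAt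
  have hFd : ∀ j, DifferentiableOn ℂ (F j) (Metric.ball 0 1) := fun j z hz =>
    ((hphid j z hz).const_mul _).differentiableWithinAt
  have hFle : ∀ j, ∀ w ∈ Metric.ball (0:ℂ) 1, ‖F j w‖ ≤ (1/4 : ℝ) ^ j := by
    intro j w hw
    rw [hF]
    simp only
    rw [norm_mul, hcn]
    have := (aux_phi_lt _ w (hAn j) (mem_ball_zero_iff.1 hw)).le
    exact mul_le_of_le_one_right (by positivity) this
  have hFder : ∀ j, ∀ z ∈ Metric.ball (0:ℂ) 1,
      deriv (F j) z = (σ j * (1/4) ^ j) * deriv (phi (A j)) z := by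
    intro j z hz
    exact deriv_const_mul _ (hphid j z hz)
  set f : ℂ → ℂ := fun w => ∑' j, F j w with hf
  have hfd : HolOn f := differentiableOn_tsum_of_summable_norm hu hFd Metric.isOpen_ball hFle
  have hfs : ∀ z ∈ Metric.ball (0:ℂ) 1, HasSum (fun j => deriv (F j) z) (deriv f z) := fun z hz =>
    Complex.hasSum_deriv_of_summable_norm hu hFd Metric.isOpen_ball hFle hz
  have hp0 : 0 ≤ p := by linarith
  -- `f` is in the Besov space
  have hfB : f ∈ Besov p := by
    refine ⟨hfd, ?_⟩
    rw [aux_dA]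
    obtain ⟨B, hB, hBa⟩ := aux_phi_besov p hp
    obtain ⟨L, hL, hLx⟩ := aux_holder p hp
    have hpt : ∀ z ∈ Metric.ball (0:ℂ) 1,
        ENNReal.ofReal ((1 - ‖z‖) ^ (p - 2) * ‖deriv f z‖ ^ p) ≤
        L * ∑' k, 2⁻¹ ^ k *
          ENNReal.ofReal ((1 - ‖z‖) ^ (p - 2) * ‖deriv (phi (A k)) z‖ ^ p) := by
      intro z hz
      have hz1 := mem_ball_zero_iff.1 hz
      have hw0 : 0 ≤ (1 - ‖z‖) ^ (p - 2) := Real.rpow_nonneg (by linarith) _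
      have h1 : ‖deriv f z‖ₑ ≤ ∑' k, (2⁻¹ ^ k * ‖deriv (phi (A k)) z‖ₑ) * 2⁻¹ ^ k := by
        have h2 : ‖deriv f z‖ₑ ≤ ∑' k, ‖deriv (F k) z‖ₑ := by
          rw [← (hfs z hz).tsum_eq]
          exact enorm_tsum_le_tsum_enorm
        refine h2.trans (le_of_eq ?_)
        congr 1
        ext k
        rw [hFder k z hz, enorm_mul, ← ofReal_norm, hcn]
        have : ENNReal.ofReal ((1/4:ℝ) ^ k) = 2⁻¹ ^ k * 2⁻¹ ^ k := by
          rw [← mul_pow, ENNReal.ofReal_pow (by norm_num)]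
          congr 1
          have : (2⁻¹ : ℝ≥0∞) = ENNReal.ofReal (1/2) := by
            rw [one_div, ENNReal.ofReal_inv_of_pos (by norm_num)]
            norm_num
          rw [this, ← ENNReal.ofReal_mul (by norm_num)]
          norm_num
        rw [this]
        ring
      have h3 : ∀ x : ℂ, ENNReal.ofReal ((1 - ‖z‖) ^ (p - 2) * ‖x‖ ^ p) =
          ENNReal.ofReal ((1 - ‖z‖) ^ (p - 2)) * ‖x‖ₑ ^ p := by
        intro x
        rw [ENNReal.ofReal_mul hw0, ← ENNReal.ofReal_rpow_of_nonneg (norm_nonneg _) hp0,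
          ofReal_norm]
      simp only [h3]
      calc _ ≤ ENNReal.ofReal ((1 - ‖z‖) ^ (p - 2)) *
            (L * ∑' k, 2⁻¹ ^ k * ‖deriv (phi (A k)) z‖ₑ ^ p) := by
            gcongr
            exact (ENNReal.rpow_le_rpow h1 hp0).trans (hLx _)
        _ = _ := by
            rw [mul_left_comm, ← ENNReal.tsum_mul_left]
            congr 2
            ext k
            ring
    calc _ ≤ ∫⁻ z in Metric.ball (0:ℂ) 1, L * ∑' k, 2⁻¹ ^ k *
          ENNReal.ofReal ((1 - ‖z‖) ^ (p - 2) * ‖deriv (phi (A k)) z‖ ^ p) :=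
          setLIntegral_mono' Metric.isOpen_ball.measurableSet hpt
      _ = L * ∑' k, 2⁻¹ ^ k * ∫⁻ z in Metric.ball (0:ℂ) 1,
          ENNReal.ofReal ((1 - ‖z‖) ^ (p - 2) * ‖deriv (phi (A k)) z‖ ^ p) := by
          have hmeas : ∀ k, Measurable (fun z : ℂ =>
              ENNReal.ofReal ((1 - ‖z‖) ^ (p - 2) * ‖deriv (phi (A k)) z‖ ^ p)) := by
            intro k
            have := measurable_deriv (phi (A k))
            fun_prop
          rw [lintegral_const_mul' _ _ hL.ne, lintegral_tsum
            (fun k => ((hmeas k).const_mul _).aemeasurable)]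
          congr 2
          ext k
          rw [lintegral_const_mul _ (hmeas k)]
      _ ≤ L * ∑' k : ℕ, 2⁻¹ ^ k * B := by
          gcongr with k
          exact hBa _ (hAn k)
      _ < ⊤ := by
          rw [ENNReal.tsum_mul_right, ENNReal.tsum_geometric]
          refine ENNReal.mul_lt_top hL (ENNReal.mul_lt_top ?_ hB)
          norm_num
  obtain ⟨-, C, hC⟩ := hmap f hfB
  have hlow : ∀ k : ℕ, (2/3 : ℝ) * k ≤ C := by
    intro k
    have h1 := hC (A k) (hAb k)
    rw [(aux_hasDerivAt_Ig g f hg hfd (A k) (hAb k)).deriv, norm_mul] at h1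
    set D := 1 - ‖A k‖ ^ 2 with hD
    have hD0 : 0 < D := by rw [hD]; nlinarith [hAn k, norm_nonneg (A k)]
    have hphi0 : phi (A k) (A k) = 0 := by simp [phi]
    have hkk : D * ‖deriv (phi (A k)) (A k)‖ = 1 := by
      rw [← aux_phi_norm _ _ (hAn k) (hAn k), hphi0]; simp
    have hjk : ∀ j, D * ‖deriv (phi (A j)) (A k)‖ ≤ 1 := by
      intro j
      rw [← aux_phi_norm _ _ (hAn j) (hAn k)]
      nlinarith [norm_nonneg (phi (A j) (A k))]
    have hs := hfs (A k) (hAb k)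
    have hterm : ∀ j, deriv (F j) (A k) = σ j * M j k := by
      intro j
      rw [hFder j _ (hAb k), hM]
      ring
    simp only [hterm] at hs
    have hsplit := hs.summable.sum_add_tsum_nat_add (k + 1)
    rw [hs.tsum_eq] at hsplit
    have hhead : ‖M k k‖ ≤ ‖∑ j ∈ Finset.range (k + 1), σ j * M j k‖ := aux_sig_sum M k
    have hMn : ∀ j, ‖M j k‖ = (1/4:ℝ) ^ j * ‖deriv (phi (A j)) (A k)‖ := by
      intro j
      rw [hM]
      simp
    have htail : ‖∑' j, σ (j + (k + 1)) * M (j + (k + 1)) k‖ ≤ (1/4:ℝ) ^ k / 3 / D := by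
      have hg1 : HasSum (fun j : ℕ => (1/4:ℝ) ^ j * ((1/4) ^ (k + 1) / D))
          ((1 - 1/4)⁻¹ * ((1/4) ^ (k + 1) / D)) :=
        (hasSum_geometric_of_lt_one (by norm_num) (by norm_num)).mul_right _
      have := tsum_of_norm_bounded (f := fun j => σ (j + (k + 1)) * M (j + (k + 1)) k) hg1 (by
        intro j
        rw [norm_mul, hσn, one_mul, hMn, pow_add, mul_assoc, div_eq_mul_inv _ D]
        gcongr
        rw [← one_div, le_div_iff₀ hD0, mul_comm]
        exact hjk _)
      refine this.trans (le_of_eq ?_)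
      rw [pow_succ]
      ring
    have hder : (2/3 : ℝ) * (1/4) ^ k ≤ D * ‖deriv f (A k)‖ := by
      have h2 : ‖M k k‖ - (1/4:ℝ) ^ k / 3 / D ≤ ‖deriv f (A k)‖ := by
        rw [← hsplit]
        have := norm_sub_le_norm_add (∑ j ∈ Finset.range (k + 1), σ j * M j k)
          (∑' j, σ (j + (k + 1)) * M (j + (k + 1)) k)
        linarith
      have h3 : D * (‖M k k‖ - (1/4:ℝ) ^ k / 3 / D) = (2/3 : ℝ) * (1/4) ^ k := by
        rw [mul_sub, hMn, mul_left_comm, hkk, mul_div_cancel₀ _ hD0.ne']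
        ring
      rw [← h3]
      gcongr
    have h4 : (2/3 : ℝ) * k = (k * 4 ^ k) * ((2/3 : ℝ) * (1/4) ^ k) := by
      rw [one_div, inv_pow]
      field_simp
    rw [h4]
    calc _ ≤ ‖g (A k)‖ * (D * ‖deriv f (A k)‖) := by
          gcongr
          exact (hgA k).le
      _ = D * (‖g (A k)‖ * ‖deriv f (A k)‖) := by ring
      _ ≤ C := h1
  obtain ⟨n, hn⟩ := exists_nat_gt (C * (3/2))
  have := hlow n
  linarith

/-- For `1 < p < ∞` and `g` holomorphic on the unit disc, `I_g` maps `Bᵖ`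
into the Bloch space iff `g ∈ H^∞`. -/
theorem stmt2 (p : ℝ) (hp : 1 < p) (g : ℂ → ℂ) (hg : HolOn g) :
    MapsInto (Ig g) (Besov p) Bloch ↔ g ∈ Hinf := by
  constructor
  · intro h
    exact ⟨hg, aux_necessity p hp g hg h⟩
  · rintro ⟨-, C, hC⟩ f hf
    refine ⟨fun z hz => (aux_hasDerivAt_Ig g f hg hf.1 z hz).differentiableAt.differentiableWithinAt, ?_⟩
    obtain ⟨K, hK⟩ := aux_besov_bloch p hp f hf
    refine ⟨C * K, fun z hz => ?_⟩
    rw [(aux_hasDerivAt_Ig g f hg hf.1 z hz).deriv, norm_mul]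
    have h1 := hC z hz
    have h2 := hK z hz
    have h0 : 0 ≤ C := (norm_nonneg _).trans h1
    have hz1 := mem_ball_zero_iff.1 hz
    have h3 : 0 ≤ (1 - ‖z‖ ^ 2) * ‖deriv f z‖ :=
      mul_nonneg (by nlinarith [norm_nonneg z]) (norm_nonneg _)
    calc (1 - ‖z‖ ^ 2) * (‖g z‖ * ‖deriv f z‖) = ‖g z‖ * ((1 - ‖z‖ ^ 2) * ‖deriv f z‖) := by ring
      _ ≤ C * K := mul_le_mul h1 h2 h3 h0
end
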